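/- Let f(t,x;τ,ξ) be a polynomial of degree 2 in (τ,ξ) ∈ ℝ×ℝⁿ with real-analytic coefficients on an open set U ⊂ ℝ×ℝⁿ and homogeneous decomposition f = f₂+f₁+f₀. Let ψ be real-analytic with Σ = {(t,x)∈U : t=ψ(x)}, and assume for a nonzero constant a that 0 ≠ 1 − |∇ψ(x)|² = a·f₂(ψ(x),x;−1,∇ψ(x)) for all relevant x, and additionally that f₂(t,x;1,∇ψ(x)) = f₂(t,x;−1,∇ψ(x)) for all (t,x). Then there exist an open neighborhood Ω of Σ and a real-analytic function v on Ω such that u(t,x) = −a·log(ψ(x)−t) + v(t,x) is a real-analytic solution of u_tt − Δu = f(t,x;∂_t u,∇u) on Ω ∩ {t < ψ(x)}, the negative side of Σ; together with the solution on {t > ψ(x)}, there exist solutions on both sides of Σ whose singularities propagate along the noncharacteristic hypersurface Σ. -/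

import Mathlib

open Real Filter

/-- partial derivative in `t` of a function `u(t,x)` -/
noncomputable def ptd {n : ℕ} (u : ℝ → (Fin n → ℝ) → ℝ) (t : ℝ) (x : Fin n → ℝ) : ℝ :=
  deriv (fun s => u s x) t

/-- partial derivative in `x i` of a function `u(t,x)` -/
noncomputable def pxd {n : ℕ} (i : Fin n) (u : ℝ → (Fin n → ℝ) → ℝ) (t : ℝ)
    (x : Fin n → ℝ) : ℝ :=
  deriv (fun y => u t (Function.update x i y)) (x i)

/-- Laplacian in `x` of a function `u(t,x)` -/
noncomputable def lapx {n : ℕ} (u : ℝ → (Fin n → ℝ) → ℝ) (t : ℝ) (x : Fin n → ℝ) : ℝ :=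
  ∑ i, pxd i (pxd i u) t x

/-- gradient in `x` of a function `u(t,x)` -/
noncomputable def gradx {n : ℕ} (u : ℝ → (Fin n → ℝ) → ℝ) (t : ℝ) (x : Fin n → ℝ) :
    Fin n → ℝ :=
  fun i => pxd i u t x

/-- gradient of a function of `x` alone -/
noncomputable def gradp {n : ℕ} (ψ : (Fin n → ℝ) → ℝ) (x : Fin n → ℝ) : Fin n → ℝ :=
  fun i => deriv (fun y => ψ (Function.update x i y)) (x i)

/-- `g(t,x;τ,ξ)` is a polynomial homogeneous of degree `l` in `(τ,ξ) ∈ ℝ × ℝⁿ` whose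
coefficients are real-analytic functions of `(t,x)` on `U`. -/
def HomogPoly {n : ℕ} (l : ℕ) (U : Set (ℝ × (Fin n → ℝ)))
    (g : ℝ → (Fin n → ℝ) → ℝ → (Fin n → ℝ) → ℝ) : Prop :=
  ∃ c : (Fin l → Fin (n + 1)) → ℝ → (Fin n → ℝ) → ℝ,
    (∀ μ, AnalyticOnNhd ℝ (fun p : ℝ × (Fin n → ℝ) => c μ p.1 p.2) U) ∧
    ∀ t x τ ξ, g t x τ ξ =
      ∑ μ : Fin l → Fin (n + 1), c μ t x * ∏ k, (Fin.cons τ ξ : Fin (n + 1) → ℝ) (μ k)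

/-- `u` solves the nonlinear wave equation `u_tt - Δu = f₂ + f₁ + f₀ (t,x; ∂_t u, ∇u)`
at every point of `S`. -/
def SolvesWave {n : ℕ} (f₂ f₁ f₀ : ℝ → (Fin n → ℝ) → ℝ → (Fin n → ℝ) → ℝ)
    (u : ℝ → (Fin n → ℝ) → ℝ) (S : Set (ℝ × (Fin n → ℝ))) : Prop :=
  ∀ t x, (t, x) ∈ S →
    ptd (ptd u) t x - lapx u t x =
      f₂ t x (ptd u t x) (gradx u t x) + f₁ t x (ptd u t x) (gradx u t x)
        + f₀ t x (ptd u t x) (gradx u t x)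

section FuchsTheory

open scoped Topology Nat ContDiff


section FuchsCalculus

variable {X : Type*} [NormedAddCommGroup X] [NormedSpace ℝ X]

/-- directional derivative as an operator on functions -/
noncomputable def fkD (v : X) (f : X → ℝ) : X → ℝ := fun z => fderiv ℝ f z v

theorem fkD_analyticAt {v : X} {f : X → ℝ} {z : X} (h : AnalyticAt ℝ f z) :
    AnalyticAt ℝ (fkD v f) z :=
  (ContinuousLinearMap.apply ℝ ℝ v).analyticAt _ |>.comp h.fderiv

theorem fkD_iter_analyticAt {v : X} {f : X → ℝ} {z : X} (h : AnalyticAt ℝ f z) (k : ℕ) :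
    AnalyticAt ℝ ((fkD v)^[k] f) z := by
  induction k with
  | zero => simpa using h
  | succ k ih => rw [Function.iterate_succ_apply']; exact fkD_analyticAt ih

theorem fkD_congr {v : X} {f g : X → ℝ} {z : X} (h : f =ᶠ[𝓝 z] g) :
    fkD v f =ᶠ[𝓝 z] fkD v g := by
  filter_upwards [h.fderiv (𝕜 := ℝ)] with y hy
  simp [fkD, hy]

theorem fkD_iter_congr {v : X} {f g : X → ℝ} {z : X} (h : f =ᶠ[𝓝 z] g) (k : ℕ) :
    (fkD v)^[k] f =ᶠ[𝓝 z] (fkD v)^[k] g := by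
  induction k with
  | zero => simpa using h
  | succ k ih => simp only [Function.iterate_succ_apply']; exact fkD_congr ih

theorem fkD_add {v : X} {f g : X → ℝ} {z : X} (hf : AnalyticAt ℝ f z) (hg : AnalyticAt ℝ g z) :
    fkD v (fun y => f y + g y) =ᶠ[𝓝 z] fun y => fkD v f y + fkD v g y := by
  filter_upwards [hf.eventually_analyticAt, hg.eventually_analyticAt] with y h1 h2
  simp only [fkD]
  rw [fderiv_fun_add h1.differentiableAt h2.differentiableAt]; rfl

theorem fkD_mul {v : X} {f g : X → ℝ} {z : X} (hf : AnalyticAt ℝ f z) (hg : AnalyticAt ℝ g z) :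
    fkD v (fun y => f y * g y) =ᶠ[𝓝 z] fun y => f y * fkD v g y + fkD v f y * g y := by
  filter_upwards [hf.eventually_analyticAt, hg.eventually_analyticAt] with y h1 h2
  simp only [fkD]
  rw [fderiv_fun_mul h1.differentiableAt h2.differentiableAt]
  simp [mul_comm]

theorem fkD_iter_add {v : X} (k : ℕ) : ∀ {f g : X → ℝ} {z : X}, AnalyticAt ℝ f z →
    AnalyticAt ℝ g z →
    (fkD v)^[k] (fun y => f y + g y) z = (fkD v)^[k] f z + (fkD v)^[k] g z := by
  induction k with
  | zero => intros; rfl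
  | succ k ih =>
    intro f g z hf hg
    simp only [Function.iterate_succ_apply]
    rw [(fkD_iter_congr (fkD_add hf hg) k).self_of_nhds]
    exact ih (fkD_analyticAt hf) (fkD_analyticAt hg)

theorem fkD_iter_zero {v : X} (k : ℕ) : (fkD v)^[k] (fun _ => (0 : ℝ)) = fun _ => (0 : ℝ) := by
  induction k with
  | zero => rfl
  | succ k ih => rw [Function.iterate_succ_apply', ih]; ext z; simp [fkD]

theorem fkD_iter_sum {v : X} (k : ℕ) {ι : Type*} (s : Finset ι) {f : ι → X → ℝ} {z : X}
    (hf : ∀ i ∈ s, AnalyticAt ℝ (f i) z) :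
    (fkD v)^[k] (fun y => ∑ i ∈ s, f i y) z = ∑ i ∈ s, (fkD v)^[k] (f i) z := by
  classical
  induction s using Finset.induction_on with
  | empty => simp [fkD_iter_zero]
  | insert i s hi ih =>
    simp only [Finset.sum_insert hi]
    rw [fkD_iter_add k (hf i (by simp)), ih (fun j hj => hf j (by simp [hj]))]
    exact Finset.analyticAt_fun_sum _ (fun j hj => hf j (by simp [hj]))

theorem fkD_iter_mul {v : X} (k : ℕ) : ∀ {f g : X → ℝ} {z : X}, AnalyticAt ℝ f z →
    AnalyticAt ℝ g z →
    (fkD v)^[k] (fun y => f y * g y) z = ∑ ij ∈ Finset.HasAntidiagonal.antidiagonal k,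
      (k.choose ij.1 : ℝ) * ((fkD v)^[ij.1] f z * (fkD v)^[ij.2] g z) := by
  induction k with
  | zero => intros; simp
  | succ k ih =>
    intro f g z hf hg
    rw [Finset.sum_antidiagonal_choose_succ_mul
      (fun i j => (fkD v)^[i] f z * (fkD v)^[j] g z)]
    rw [Function.iterate_succ_apply, (fkD_iter_congr (fkD_mul hf hg) k).self_of_nhds,
      fkD_iter_add k (hf.fun_mul (fkD_analyticAt hg)) ((fkD_analyticAt hf).fun_mul hg),
      ih hf (fkD_analyticAt hg), ih (fkD_analyticAt hf) hg]
    simp only [← Function.iterate_succ_apply]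
    congr 1
    refine Finset.sum_congr rfl fun ij hij => ?_
    rw [Finset.HasAntidiagonal.mem_antidiagonal] at hij
    rw [Nat.choose_symm_of_eq_add hij.symm]

theorem fkD_comm {v w : X} {f : X → ℝ} {z : X} (hf : AnalyticAt ℝ f z) :
    fkD v (fkD w f) =ᶠ[𝓝 z] fkD w (fkD v f) := by
  filter_upwards [hf.eventually_analyticAt] with y hy
  have hs : IsSymmSndFDerivAt ℝ f y :=
    (hy.contDiffAt (n := 2)).isSymmSndFDerivAt (by simp)
  have hd : DifferentiableAt ℝ (fderiv ℝ f) y := hy.fderiv.differentiableAt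
  have key : ∀ a b : X, fkD a (fkD b f) y = fderiv ℝ (fderiv ℝ f) y a b := by
    intro a b
    have : fkD b f = fun y => fderiv ℝ f y b := rfl
    rw [this]
    simp only [fkD]
    rw [fderiv_clm_apply hd (differentiableAt_const b)]
    simp
  rw [key, key, hs v w]

theorem fkD_iter_comm {v w : X} (k : ℕ) {f : X → ℝ} {z : X} (hf : AnalyticAt ℝ f z) :
    (fkD v)^[k] (fkD w f) =ᶠ[𝓝 z] fkD w ((fkD v)^[k] f) := by
  induction k with
  | zero => rfl
  | succ k ih =>
    simp only [Function.iterate_succ_apply']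
    exact (fkD_congr ih).trans (fkD_comm (fkD_iter_analyticAt hf k))

theorem fkD_norm_le {v : X} {f : X → ℝ} {z : X} (hf : AnalyticAt ℝ f z) (hv : ‖v‖ ≤ 1) (m : ℕ) :
    ‖iteratedFDeriv ℝ m (fkD v f) z‖ ≤ ‖iteratedFDeriv ℝ (m + 1) f z‖ := by
  have := norm_iteratedFDeriv_clm_apply_const (c := v) (n := m) (N := ω)
    (hf.fderiv.contDiffAt) (by simp)
  rw [norm_iteratedFDeriv_fderiv] at this
  refine this.trans ?_
  calc _ ≤ 1 * ‖iteratedFDeriv ℝ (m + 1) f z‖ := by gcongr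
    _ = _ := one_mul _

theorem fkD_iter_norm_le {v : X} {f : X → ℝ} {z : X} (hf : AnalyticAt ℝ f z) (hv : ‖v‖ ≤ 1)
    (k : ℕ) : ∀ m, ‖iteratedFDeriv ℝ m ((fkD v)^[k] f) z‖ ≤ ‖iteratedFDeriv ℝ (k + m) f z‖ := by
  induction k with
  | zero => intro m; rw [zero_add]; rfl
  | succ k ih =>
    intro m
    rw [Function.iterate_succ_apply']
    refine (fkD_norm_le (fkD_iter_analyticAt hf k) hv m).trans ((ih (m + 1)).trans ?_)
    rw [show k + (m + 1) = k + 1 + m by ring]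

theorem fk_norm_mul_le {f g : X → ℝ} {z : X} (hf : AnalyticAt ℝ f z) (hg : AnalyticAt ℝ g z)
    (m : ℕ) : ‖iteratedFDeriv ℝ m (fun y => f y * g y) z‖ ≤ ∑ i ∈ Finset.range (m + 1),
      (m.choose i : ℝ) * ‖iteratedFDeriv ℝ i f z‖ * ‖iteratedFDeriv ℝ (m - i) g z‖ := by
  obtain ⟨u, hu, huo, hz⟩ := eventually_nhds_iff.1
    (hf.eventually_analyticAt.and hg.eventually_analyticAt)
  have hF : ContDiffOn ℝ ω f u := fun y hy => (hu y hy).1.contDiffAt.contDiffWithinAt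
  have hG : ContDiffOn ℝ ω g u := fun y hy => (hu y hy).2.contDiffAt.contDiffWithinAt
  have := norm_iteratedFDerivWithin_mul_le (A := ℝ) hF hG huo.uniqueDiffOn hz (n := m) (by simp)
  simpa only [iteratedFDerivWithin_of_isOpen _ huo hz] using this

theorem fk_norm_add_le {f g : X → ℝ} {z : X} (hf : AnalyticAt ℝ f z) (hg : AnalyticAt ℝ g z)
    (m : ℕ) : ‖iteratedFDeriv ℝ m (fun y => f y + g y) z‖ ≤
      ‖iteratedFDeriv ℝ m f z‖ + ‖iteratedFDeriv ℝ m g z‖ := by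
  have : iteratedFDeriv ℝ m (fun y => f y + g y) z =
      iteratedFDeriv ℝ m f z + iteratedFDeriv ℝ m g z :=
    iteratedFDeriv_add_apply (hf.contDiffAt) (hg.contDiffAt)
  rw [this]
  exact norm_add_le _ _

theorem fk_norm_zero (z : X) (m : ℕ) : ‖iteratedFDeriv ℝ m (fun _ : X => (0:ℝ)) z‖ = 0 := by
  simp

theorem fk_norm_sum_le {ι : Type*} (s : Finset ι) {f : ι → X → ℝ} {z : X}
    (hf : ∀ i ∈ s, AnalyticAt ℝ (f i) z) (m : ℕ) :
    ‖iteratedFDeriv ℝ m (fun y => ∑ i ∈ s, f i y) z‖ ≤ ∑ i ∈ s, ‖iteratedFDeriv ℝ m (f i) z‖ := by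
  classical
  induction s using Finset.induction_on with
  | empty => simp
  | insert i s hi ih =>
    simp only [Finset.sum_insert hi]
    refine (fk_norm_add_le (hf i (by simp))
      (Finset.analyticAt_fun_sum _ (fun j hj => hf j (by simp [hj]))) m).trans ?_
    gcongr
    exact ih (fun j hj => hf j (by simp [hj]))

theorem fk_norm_const_mul {f : X → ℝ} {z : X} (hf : AnalyticAt ℝ f z) (c : ℝ)
    (m : ℕ) : ‖iteratedFDeriv ℝ m (fun y => c * f y) z‖ = |c| * ‖iteratedFDeriv ℝ m f z‖ := by
  have : iteratedFDeriv ℝ m (fun y => c * f y) z = c • iteratedFDeriv ℝ m f z :=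
    iteratedFDeriv_const_smul_apply (a := c) (hf.contDiffAt)
  rw [this, norm_smul, Real.norm_eq_abs]

/-- Cauchy estimates -/
theorem fk_cauchy {f : X → ℝ} {z : X} (hf : AnalyticAt ℝ f z) :
    ∃ C L : ℝ, 0 < C ∧ 1 ≤ L ∧ ∀ m, ‖iteratedFDeriv ℝ m f z‖ ≤ C * m ! * L ^ m := by
  obtain ⟨p, r, hp⟩ := hf
  obtain ⟨r', hr'0, hr'⟩ := ENNReal.lt_iff_exists_nnreal_btwn.1 (hp.r_pos)
  have hr'p : (r' : ENNReal) < p.radius := hr'.trans_le hp.r_le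
  obtain ⟨C, hC, hb⟩ := p.norm_le_div_pow_of_pos_of_lt_radius (by exact_mod_cast hr'0) hr'p
  have hr0 : (0:ℝ) < r' := by exact_mod_cast hr'0
  refine ⟨C, max 1 ((r':ℝ)⁻¹), hC, le_max_left _ _, fun m => ?_⟩
  have h1 : ‖iteratedFDeriv ℝ m f z‖ ≤ m ! * ‖p m‖ := by
    refine ContinuousMultilinearMap.opNorm_le_bound (by positivity) fun v => ?_
    rw [hp.iteratedFDeriv_eq_sum_of_completeSpace]
    refine (norm_sum_le _ _).trans ?_
    have : ∀ σ ∈ (Finset.univ : Finset (Equiv.Perm (Fin m))), ‖p m (fun i => v (σ i))‖ ≤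
        ‖p m‖ * ∏ i, ‖v i‖ := by
      intro σ _
      refine ((p m).le_opNorm _).trans (le_of_eq ?_)
      rw [Equiv.prod_comp σ (fun i => ‖v i‖)]
    refine (Finset.sum_le_sum this).trans (le_of_eq ?_)
    simp [Finset.card_univ, Fintype.card_perm]
    ring
  refine h1.trans ?_
  calc (m ! : ℝ) * ‖p m‖ ≤ m ! * (C / r' ^ m) := by gcongr; exact hb m
    _ = C * m ! * ((r':ℝ)⁻¹) ^ m := by rw [inv_pow]; ring
    _ ≤ _ := by gcongr; exact le_max_right _ _

end FuchsCalculus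

section FuchsTaylor

variable {E : Type*} [NormedAddCommGroup E] [NormedSpace ℝ E]

/-- `k`-th derivative in the first variable, restricted to `s = 0` -/
noncomputable def fkT (k : ℕ) (f : ℝ × E → ℝ) : E → ℝ :=
  fun x => (fkD ((1, 0) : ℝ × E))^[k] f (0, x)

theorem fkT_analyticAt {f : ℝ × E → ℝ} {x : E} (hf : AnalyticAt ℝ f (0, x)) (k : ℕ) :
    AnalyticAt ℝ (fkT k f) x := by
  have h := fkD_iter_analyticAt (v := ((1, 0) : ℝ × E)) hf k
  exact AnalyticAt.comp (f := fun y : E => ((0 : ℝ), y)) (x := x) h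
    (analyticAt_const.prod analyticAt_id)

theorem fkT_mul {f g : ℝ × E → ℝ} {x : E} (hf : AnalyticAt ℝ f (0, x))
    (hg : AnalyticAt ℝ g (0, x)) (k : ℕ) :
    fkT k (fun y => f y * g y) x = ∑ ij ∈ Finset.HasAntidiagonal.antidiagonal k,
      (k.choose ij.1 : ℝ) * (fkT ij.1 f x * fkT ij.2 g x) :=
  fkD_iter_mul k hf hg

theorem fkT_add {f g : ℝ × E → ℝ} {x : E} (hf : AnalyticAt ℝ f (0, x))
    (hg : AnalyticAt ℝ g (0, x)) (k : ℕ) :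
    fkT k (fun y => f y + g y) x = fkT k f x + fkT k g x :=
  fkD_iter_add k hf hg

theorem fkT_sum {ι : Type*} (s : Finset ι) {f : ι → ℝ × E → ℝ} {x : E}
    (hf : ∀ i ∈ s, AnalyticAt ℝ (f i) (0, x)) (k : ℕ) :
    fkT k (fun y => ∑ i ∈ s, f i y) x = ∑ i ∈ s, fkT k (f i) x :=
  fkD_iter_sum k s hf

theorem fkT_congr {f g : ℝ × E → ℝ} {x : E} (h : f =ᶠ[𝓝 (0, x)] g) (k : ℕ) :
    fkT k f x = fkT k g x :=
  (fkD_iter_congr h k).self_of_nhds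

theorem fkT_ds (f : ℝ × E → ℝ) (k : ℕ) : fkT k (fkD (1, 0) f) = fkT (k + 1) f := rfl

theorem fkT_dx {f : ℝ × E → ℝ} {x : E} (hf : AnalyticAt ℝ f (0, x)) (e : E) (k : ℕ) :
    fkT k (fkD (0, e) f) x = fkD e (fkT k f) x := by
  have h := (fkD_iter_comm (v := ((1, 0) : ℝ × E)) (w := (0, e)) k hf).self_of_nhds
  simp only [fkT]
  rw [h]
  have hd : HasFDerivAt ((fkD ((1, 0) : ℝ × E))^[k] f) _ (0, x) :=
    (fkD_iter_analyticAt (v := ((1, 0) : ℝ × E)) hf k).differentiableAt.hasFDerivAt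
  have hc : HasFDerivAt (fun y : E => ((0 : ℝ), y)) (ContinuousLinearMap.inr ℝ ℝ E) x :=
    (ContinuousLinearMap.inr ℝ ℝ E).hasFDerivAt
  have := (HasFDerivAt.comp (f := fun y : E => ((0 : ℝ), y)) x hd hc).fderiv
  have hT : fkT k f = (fkD ((1, 0) : ℝ × E))^[k] f ∘ fun y : E => ((0 : ℝ), y) := rfl
  simp only [fkD]
  rw [hT, this]
  simp [fkD]

theorem fkT_smul (k : ℕ) : ∀ {f : ℝ × E → ℝ} {x : E}, AnalyticAt ℝ f (0, x) →
    fkT k (fun z => z.1 * f z) x = k * fkT (k - 1) f x := by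
  induction k with
  | zero => intro f x _; simp [fkT]
  | succ k ih =>
    intro f x hf
    have h1 : ∀ z : ℝ × E, AnalyticAt ℝ (fun z : ℝ × E => z.1) z := fun z => analyticAt_fst
    have hD : fkD ((1, 0) : ℝ × E) (fun z => z.1 * f z) =ᶠ[𝓝 (0, x)]
        fun z => z.1 * fkD (1, 0) f z + f z := by
      refine (fkD_mul (h1 _) hf).trans (Eventually.of_forall fun z => ?_)
      have : fkD ((1, 0) : ℝ × E) (fun z => z.1) z = 1 := by
        simp only [fkD]
        have : (fun z : ℝ × E => z.1) = ContinuousLinearMap.fst ℝ ℝ E := rfl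
        rw [this, ContinuousLinearMap.fderiv]; rfl
      simp only [this]; ring
    rw [← fkT_ds, fkT_congr hD, fkT_add ((h1 _).fun_mul (fkD_analyticAt hf)) hf,
      ih (fkD_analyticAt hf), fkT_ds]
    rcases k with _ | k
    · simp
    · simp; ring

theorem fk_slice {f : ℝ × E → ℝ} {x : E} (k : ℕ) : ∀ {s : ℝ}, AnalyticAt ℝ f (s, x) →
    iteratedDeriv k (fun σ => f (σ, x)) s = (fkD ((1, 0) : ℝ × E))^[k] f (s, x) := by
  induction k with
  | zero => intro s _; simp
  | succ k ih =>
    intro s hf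
    have hcont : ContinuousAt (fun σ : ℝ => (σ, x)) s := by fun_prop
    have h1 : iteratedDeriv k (fun σ => f (σ, x)) =ᶠ[𝓝 s]
        fun σ => (fkD ((1, 0) : ℝ × E))^[k] f (σ, x) := by
      filter_upwards [hcont.eventually hf.eventually_analyticAt] with σ hσ using ih hσ
    rw [iteratedDeriv_succ, h1.deriv_eq, Function.iterate_succ_apply']
    have hd : HasFDerivAt ((fkD ((1, 0) : ℝ × E))^[k] f) _ (s, x) :=
      (fkD_iter_analyticAt (v := ((1, 0) : ℝ × E)) hf k).differentiableAt.hasFDerivAt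
    have hc : HasDerivAt (fun σ : ℝ => (σ, x)) ((1 : ℝ), (0 : E)) s :=
      (hasDerivAt_id s).prodMk (hasDerivAt_const s x)
    have := hd.comp_hasDerivAt s hc
    exact this.deriv

theorem fk_zero_of_iteratedDeriv {g : ℝ → ℝ} (hg : AnalyticAt ℝ g 0)
    (h : ∀ k, iteratedDeriv k g 0 = 0) : g =ᶠ[𝓝 0] fun _ => 0 := by
  obtain ⟨p, r, hp⟩ := hg
  filter_upwards [Metric.eball_mem_nhds (0:ℝ) hp.r_pos] with y hy
  have h1 := hp.hasSum_iteratedFDeriv hy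
  have h2 : (fun n : ℕ => ((n ! : ℝ))⁻¹ • iteratedFDeriv ℝ n g 0 fun _ => y) = fun _ => 0 := by
    ext n
    rw [iteratedFDeriv_apply_eq_iteratedDeriv_mul_prod, h n]
    simp
  rw [h2, zero_add] at h1
  exact h1.unique hasSum_zero

theorem fkT_identity {f : ℝ × E → ℝ} {x₀ : E} (hf : AnalyticAt ℝ f (0, x₀))
    (h : ∀ᶠ x in 𝓝 x₀, ∀ k, fkT k f x = 0) : f =ᶠ[𝓝 (0, x₀)] fun _ => 0 := by
  have h2 : ∀ᶠ z : ℝ × E in 𝓝 (0, x₀), ∀ k, fkT k f z.2 = 0 :=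
    (continuous_snd.continuousAt (x := ((0 : ℝ), x₀))).eventually h
  obtain ⟨ε, hε, hb⟩ := Metric.eventually_nhds_iff_ball.1 (hf.eventually_analyticAt.and h2)
  filter_upwards [Metric.ball_mem_nhds _ hε] with z hz
  obtain ⟨s, x⟩ := z
  rw [← ball_prod_same, Set.mem_prod] at hz
  have hm : ∀ σ ∈ Metric.ball (0:ℝ) ε, (σ, x) ∈ Metric.ball ((0:ℝ), x₀) ε := by
    intro σ hσ
    rw [← ball_prod_same]; exact ⟨hσ, hz.2⟩
  have hg : AnalyticOnNhd ℝ (fun σ => f (σ, x)) (Metric.ball (0:ℝ) ε) := by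
    intro σ hσ
    exact AnalyticAt.comp (f := fun σ : ℝ => (σ, x)) (hb _ (hm σ hσ)).1
      (analyticAt_id.prod analyticAt_const)
  have h0 : (0:ℝ) ∈ Metric.ball (0:ℝ) ε := Metric.mem_ball_self hε
  refine hg.eqOn_zero_of_preconnected_of_eventuallyEq_zero
    (convex_ball _ _).isPreconnected h0 (fk_zero_of_iteratedDeriv (hg 0 h0) fun k => ?_) hz.1
  rw [fk_slice k (hb _ (hm 0 h0)).1]
  exact (hb _ (hm 0 h0)).2 k

theorem fkT_cauchy {f : ℝ × E → ℝ} {x : E} (hf : AnalyticAt ℝ f (0, x)) :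
    ∃ C L : ℝ, 0 < C ∧ 1 ≤ L ∧ ∀ k m, ‖iteratedFDeriv ℝ m (fkT k f) x‖ ≤
      C * (k + m)! * L ^ (k + m) := by
  obtain ⟨C, L, hC, hL, hb⟩ := fk_cauchy hf
  refine ⟨C, L, hC, hL, fun k m => ?_⟩
  set F := (fkD ((1, 0) : ℝ × E))^[k] f with hF
  have hFa : AnalyticAt ℝ F (0, x) := fkD_iter_analyticAt hf k
  have h1 : ‖iteratedFDeriv ℝ m F (0, x)‖ ≤ C * (k + m)! * L ^ (k + m) :=
    (fkD_iter_norm_le hf (by simp [Prod.norm_def]) k m).trans (hb _)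
  refine le_trans ?_ h1
  obtain ⟨u, hu, huo, hz⟩ := eventually_nhds_iff.1 hFa.eventually_analyticAt
  have hFu : ContDiffOn ℝ ω F u := fun y hy => (hu y hy).contDiffAt.contDiffWithinAt
  have hpo : IsOpen ((ContinuousLinearMap.inr ℝ ℝ E) ⁻¹' u) :=
    huo.preimage (ContinuousLinearMap.inr ℝ ℝ E).continuous
  have hx : (ContinuousLinearMap.inr ℝ ℝ E) x ∈ u := hz
  have := (ContinuousLinearMap.inr ℝ ℝ E).iteratedFDerivWithin_comp_right hFu huo.uniqueDiffOn
    hpo.uniqueDiffOn hx (i := m) (by simp)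
  rw [iteratedFDerivWithin_of_isOpen _ hpo hx, iteratedFDerivWithin_of_isOpen _ huo hx] at this
  have hT : fkT k f = F ∘ (ContinuousLinearMap.inr ℝ ℝ E) := rfl
  rw [hT, this]
  refine (ContinuousMultilinearMap.norm_compContinuousLinearMap_le _ _).trans ?_
  have h2 : ∏ _i : Fin m, ‖ContinuousLinearMap.inr ℝ ℝ E‖ ≤ 1 := by
    refine Finset.prod_le_one (fun _ _ => norm_nonneg _) fun _ _ => ?_
    exact ContinuousLinearMap.opNorm_le_bound _ zero_le_one fun y => by simp [Prod.norm_def]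
  calc _ ≤ ‖iteratedFDeriv ℝ m F (ContinuousLinearMap.inr ℝ ℝ E x)‖ * 1 := by gcongr
    _ = _ := by rw [mul_one]; rfl

/-- coefficients of a one-variable series -/
theorem fk_series_iteratedDeriv {g : ℕ → ℝ} {M L : ℝ} (hL : 0 < L)
    (hg : ∀ k, |g k| ≤ M * L ^ k) (k : ℕ) :
    iteratedDeriv k (fun s => ∑' j, g j * s ^ j) 0 = k ! * g k := by
  set p := FormalMultilinearSeries.ofScalars ℝ g with hp
  have hr : ((Real.toNNReal L⁻¹ : NNReal) : ENNReal) ≤ p.radius := by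
    refine p.le_radius_of_bound M fun n => ?_
    have hn : ‖p n‖ ≤ |g n| := by
      simp [hp]
    rw [Real.coe_toNNReal _ (by positivity)]
    calc ‖p n‖ * L⁻¹ ^ n ≤ (M * L ^ n) * L⁻¹ ^ n := by gcongr; exact hn.trans (hg n)
      _ = M := by rw [inv_pow]; field_simp
  have h0 : (0 : ENNReal) < p.radius := lt_of_lt_of_le (by simpa using hL) hr
  have hs := p.hasFPowerSeriesOnBall h0
  have hsum : p.sum = fun s => ∑' j, g j * s ^ j := by
    ext s
    simp [hp, FormalMultilinearSeries.sum, mul_comm]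
  rw [hsum] at hs
  have := hs.factorial_smul (y := 1) k
  rw [iteratedFDeriv_apply_eq_iteratedDeriv_mul_prod] at this
  simp only [Finset.prod_const_one, one_smul] at this
  rw [← this]
  simp [hp]

end FuchsTaylor

section FuchsSeries

variable {E : Type*} [NormedAddCommGroup E] [NormedSpace ℝ E]

/-- joint power series of `∑ s^k q_k(x)` -/
noncomputable def fkP : (N : ℕ) → (ℕ → FormalMultilinearSeries ℝ E ℝ) →
    ContinuousMultilinearMap ℝ (fun _ : Fin N => ℝ × E) ℝ
  | 0, q => (q 0 0).compContinuousLinearMap (fun _ => ContinuousLinearMap.snd ℝ ℝ E)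
  | N + 1, q => (q 0 (N + 1)).compContinuousLinearMap (fun _ => ContinuousLinearMap.snd ℝ ℝ E) +
      ContinuousLinearMap.uncurryLeft
        ((ContinuousLinearMap.fst ℝ ℝ E).smulRight (fkP N (fun k => q (k + 1))))

theorem fk_norm_comp_snd (N : ℕ) (p : ContinuousMultilinearMap ℝ (fun _ : Fin N => E) ℝ) :
    ‖p.compContinuousLinearMap (fun _ => ContinuousLinearMap.snd ℝ ℝ E)‖ ≤ ‖p‖ := by
  refine (ContinuousMultilinearMap.norm_compContinuousLinearMap_le _ _).trans ?_
  have h2 : ∏ _i : Fin N, ‖ContinuousLinearMap.snd ℝ ℝ E‖ ≤ 1 :=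
    Finset.prod_le_one (fun _ _ => norm_nonneg _)
      fun _ _ => ContinuousLinearMap.norm_snd_le ℝ ℝ E
  calc _ ≤ ‖p‖ * 1 := by gcongr
    _ = _ := mul_one _

theorem fkP_norm (N : ℕ) : ∀ (q : ℕ → FormalMultilinearSeries ℝ E ℝ) (M L : ℝ),
    0 ≤ M → 0 ≤ L → (∀ k m, ‖q k m‖ ≤ M * L ^ (k + m)) → ‖fkP N q‖ ≤ (N + 1) * M * L ^ N := by
  induction N with
  | zero =>
    intro q M L hM hL h
    rw [fkP]
    refine (fk_norm_comp_snd _ _).trans ((h 0 0).trans (le_of_eq (by simp)))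
  | succ N ih =>
    intro q M L hM hL h
    rw [fkP]
    refine (norm_add_le _ _).trans ?_
    have h1 : ‖(q 0 (N + 1)).compContinuousLinearMap
        (fun _ => ContinuousLinearMap.snd ℝ ℝ E)‖ ≤ M * L ^ (N + 1) :=
      (fk_norm_comp_snd _ _).trans ((h 0 (N + 1)).trans (le_of_eq (by simp)))
    have h2 := ih (fun k => q (k + 1)) (M * L) L (by positivity) hL
      (fun k m => (h (k + 1) m).trans (le_of_eq (by ring)))
    have h3 : ‖ContinuousLinearMap.uncurryLeft (Ei := fun _ : Fin (N + 1) => ℝ × E)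
        ((ContinuousLinearMap.fst ℝ ℝ E).smulRight (fkP N (fun k => q (k + 1))))‖ ≤
        (N + 1) * (M * L) * L ^ N := by
      rw [ContinuousLinearMap.uncurryLeft_norm, ContinuousLinearMap.norm_smulRight_apply]
      calc _ ≤ 1 * ((N + 1) * (M * L) * L ^ N) := by
            gcongr
            exact ContinuousLinearMap.norm_fst_le ℝ ℝ E
        _ = _ := one_mul _
    refine (add_le_add h1 h3).trans (le_of_eq ?_)
    push_cast; ring

theorem fkP_diag (N : ℕ) : ∀ (q : ℕ → FormalMultilinearSeries ℝ E ℝ) (z : ℝ × E),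
    fkP N q (fun _ => z) = ∑ ij ∈ Finset.HasAntidiagonal.antidiagonal N,
      z.1 ^ ij.1 * q ij.1 ij.2 (fun _ => z.2) := by
  induction N with
  | zero => intro q z; simp [fkP]
  | succ N ih =>
    intro q z
    rw [fkP, Finset.Nat.antidiagonal_succ, Finset.sum_cons, Finset.sum_map]
    have h1 : (ContinuousLinearMap.uncurryLeft
        ((ContinuousLinearMap.fst ℝ ℝ E).smulRight (fkP N (fun k => q (k + 1))))) (fun _ => z) =
        z.1 * fkP N (fun k => q (k + 1)) (fun _ => z) := by
      rw [ContinuousLinearMap.uncurryLeft_apply]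
      rfl
    rw [add_apply, h1, ih, Finset.mul_sum]
    congr 1
    · simp
    · refine Finset.sum_congr rfl fun ij _ => ?_
      show z.1 * (z.1 ^ ij.1 * q (ij.1 + 1) ij.2 (fun _ => z.2)) =
        z.1 ^ (ij.1 + 1) * q (ij.1 + 1) ij.2 (fun _ => z.2)
      rw [pow_succ]; ring

theorem fk_joint {g : ℕ → E → ℝ} {x₀ : E} {V : Set E} (hV : V ∈ 𝓝 x₀)
    (hg : ∀ k, ∀ x ∈ V, AnalyticAt ℝ (g k) x) {M L : ℝ} (hM : 0 ≤ M) (hL : 1 ≤ L)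
    (hb : ∀ k m, ‖iteratedFDeriv ℝ m (g k) x₀‖ ≤ M * m ! * L ^ (k + m)) :
    AnalyticAt ℝ (fun z : ℝ × E => ∑' k, g k z.2 * z.1 ^ k) (0, x₀) ∧
    ∃ M' L' : ℝ, 0 < L' ∧ ∀ᶠ x in 𝓝 x₀, ∀ k, |g k x| ≤ M' * L' ^ k := by
  obtain ⟨ε₀, hε₀, hball⟩ := Metric.mem_nhds_iff.1 hV
  have hL0 : 0 < L := by linarith
  set ε := min ε₀ (1 / (2 * L)) with hεdef
  have hε : 0 < ε := by positivity
  have hεL : ε * L ≤ 1 / 2 := by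
    have : ε ≤ 1 / (2 * L) := min_le_right _ _
    calc ε * L ≤ 1 / (2 * L) * L := by gcongr
      _ = 1 / 2 := by field_simp
  set q : ℕ → FormalMultilinearSeries ℝ E ℝ := fun k m =>
    ((m ! : ℝ))⁻¹ • iteratedFDeriv ℝ m (g k) x₀ with hq
  have hqb : ∀ k m, ‖q k m‖ ≤ M * L ^ (k + m) := by
    intro k m
    have hm : (0:ℝ) < m ! := by exact_mod_cast Nat.factorial_pos m
    simp only [hq, norm_smul, norm_inv, Real.norm_natCast]
    rw [inv_mul_le_iff₀ hm]
    refine (hb k m).trans (le_of_eq (by ring))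
  have hterm : ∀ k m (y : E), ‖q k m (fun _ => y)‖ ≤ M * L ^ k * (‖y‖ * L) ^ m := by
    intro k m y
    refine ((q k m).le_opNorm _).trans ?_
    simp only [Finset.prod_const, Finset.card_univ, Fintype.card_fin]
    calc _ ≤ M * L ^ (k + m) * ‖y‖ ^ m := by gcongr; exact hqb k m
      _ = _ := by rw [mul_pow, pow_add]; ring
  have hrad : ∀ k, ((Real.toNNReal L⁻¹ : NNReal) : ENNReal) ≤ (q k).radius := by
    intro k
    refine (q k).le_radius_of_bound (M * L ^ k) fun n => ?_
    rw [Real.coe_toNNReal _ (by positivity)]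
    calc ‖q k n‖ * L⁻¹ ^ n ≤ (M * L ^ (k + n)) * L⁻¹ ^ n := by gcongr; exact hqb k n
      _ = M * L ^ k := by rw [inv_pow, pow_add]; field_simp
  have hsub : ∀ k, Metric.ball x₀ ε ⊆ Metric.eball x₀ (q k).radius := by
    intro k x hx
    have h1 : x ∈ Metric.eball x₀ ((Real.toNNReal L⁻¹ : NNReal) : ENNReal) := by
      rw [Metric.mem_eball, edist_nndist]
      rw [Metric.mem_ball] at hx
      have : dist x x₀ < L⁻¹ := by
        refine hx.trans_le ((min_le_right _ _).trans ?_)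
        rw [one_div, mul_inv]
        have : 0 < L⁻¹ := by positivity
        linarith
      rw [ENNReal.coe_lt_coe, ← NNReal.coe_lt_coe, coe_nndist, Real.coe_toNNReal _ (by positivity)]
      exact this
    exact Metric.eball_subset_eball (hrad k) h1
  have hradpos : ∀ k, 0 < (q k).radius := fun k =>
    lt_of_lt_of_le (by simpa using hL0) (hrad k)
  have hsum1 : ∀ k (y : E), ‖y‖ < ε → HasSum (fun m => q k m (fun _ => y)) (g k (x₀ + y)) := by
    intro k y hy
    have hs0 := ((q k).hasFPowerSeriesOnBall (hradpos k))
    have hs := hs0.comp_sub x₀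
    rw [zero_add] at hs
    have han : AnalyticOnNhd ℝ (fun x => (q k).sum (x - x₀)) (Metric.ball x₀ ε) :=
      hs.analyticOnNhd.mono (hsub k)
    have hgan : AnalyticOnNhd ℝ (g k) (Metric.ball x₀ ε) := fun x hx =>
      hg k x (hball (Metric.ball_subset_ball (min_le_left _ _) hx))
    have hx0 : x₀ ∈ Metric.ball x₀ ε := Metric.mem_ball_self hε
    have hev : (fun x => (q k).sum (x - x₀)) =ᶠ[𝓝 x₀] g k := by
      obtain ⟨p, r, hp⟩ := hgan x₀ hx0
      filter_upwards [Metric.eball_mem_nhds x₀ hp.r_pos] with x hx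
      have hx' : x - x₀ ∈ Metric.eball (0 : E) r := by
        rw [Metric.mem_eball] at hx ⊢
        rwa [edist_zero_right, ← edist_eq_enorm_sub]
      have h1 := hp.hasSum_iteratedFDeriv hx'
      rw [add_sub_cancel] at h1
      exact h1.tsum_eq
    have heq := han.eqOn_of_preconnected_of_eventuallyEq hgan
      (convex_ball _ _).isPreconnected hx0 hev
    have hmem : x₀ + y ∈ Metric.ball x₀ ε := by simpa using hy
    rw [← heq hmem]
    have hmem2 : y ∈ Metric.eball (0 : E) (q k).radius := by
      have := hsub k hmem
      rw [Metric.mem_eball, edist_eq_enorm_sub, add_sub_cancel_left] at this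
      rwa [Metric.mem_eball, edist_zero_right]
    simpa using hs0.hasSum hmem2
  have hgeom : ∀ y : E, ‖y‖ < ε → HasSum (fun m => (‖y‖ * L) ^ m) (1 - ‖y‖ * L)⁻¹ ∧
      (1 - ‖y‖ * L)⁻¹ ≤ 2 := by
    intro y hy
    have h1 : ‖y‖ * L ≤ 1 / 2 := le_trans (by gcongr) hεL
    refine ⟨hasSum_geometric_of_lt_one (by positivity) (by linarith), ?_⟩
    rw [inv_le_comm₀ (by linarith) (by norm_num)]
    linarith
  constructor
  · set P : FormalMultilinearSeries ℝ (ℝ × E) ℝ := fun N => fkP N q with hP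
    have hPb : ∀ N, ‖P N‖ ≤ (N + 1) * M * L ^ N := fun N =>
      fkP_norm N q M L hM hL0.le hqb
    have hε2 : ((Real.toNNReal ε : NNReal) : ENNReal) ≤ P.radius := by
      refine P.le_radius_of_bound (M * 1) fun n => ?_
      rw [Real.coe_toNNReal _ hε.le]
      have hnn : ((n : ℝ) + 1) * (1 / 2) ^ n ≤ 1 := by
        have : n + 1 ≤ 2 ^ n := Nat.lt_two_pow_self
        have : ((n : ℝ) + 1) ≤ 2 ^ n := by exact_mod_cast this
        calc ((n : ℝ) + 1) * (1 / 2) ^ n ≤ 2 ^ n * (1 / 2) ^ n := by gcongr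
          _ = 1 := by rw [← mul_pow]; norm_num
      calc ‖P n‖ * ε ^ n ≤ (n + 1) * M * L ^ n * ε ^ n := by gcongr; exact hPb n
        _ = (n + 1) * M * (ε * L) ^ n := by rw [mul_pow]; ring
        _ ≤ (n + 1) * M * (1 / 2) ^ n := by gcongr
        _ = M * ((n + 1) * (1 / 2) ^ n) := by ring
        _ ≤ M * 1 := by gcongr
    refine ⟨P, ((Real.toNNReal ε : NNReal) : ENNReal), hε2, by simpa using hε, ?_⟩
    intro z hz
    obtain ⟨s, y⟩ := z
    have hz' : ‖(s, y)‖ < ε := by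
      rw [Metric.mem_eball, edist_zero_right] at hz
      have : ((‖(s, y)‖₊ : NNReal) : ENNReal) < (Real.toNNReal ε : NNReal) := hz
      rw [ENNReal.coe_lt_coe, ← NNReal.coe_lt_coe, Real.coe_toNNReal _ hε.le] at this
      exact this
    have hs : ‖s‖ < ε := (norm_fst_le (s, y)).trans_lt hz'
    have hy : ‖y‖ < ε := (norm_snd_le (s, y)).trans_lt hz'
    have hs1 : ‖s‖ * L < 1 := by
      have : ‖s‖ * L ≤ ε * L := by gcongr
      linarith
    have hSum : Summable (fun ij : ℕ × ℕ => s ^ ij.1 * q ij.1 ij.2 (fun _ => y)) := by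
      have hS1 : Summable (fun k => M * (‖s‖ * L) ^ k) :=
        (summable_geometric_of_lt_one (by positivity) hs1).mul_left M
      have hS2 := (hgeom y hy).1.summable
      refine Summable.of_norm_bounded (Summable.mul_of_nonneg hS1 hS2
        (fun k => by simp only [Pi.zero_apply]; positivity)
        (fun k => by simp only [Pi.zero_apply]; positivity)) fun ij => ?_
      rw [norm_mul, norm_pow]
      calc ‖s‖ ^ ij.1 * ‖q ij.1 ij.2 (fun _ => y)‖
          ≤ ‖s‖ ^ ij.1 * (M * L ^ ij.1 * (‖y‖ * L) ^ ij.2) := by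
            gcongr; exact hterm _ _ _
        _ = _ := by rw [mul_pow]; ring
    have hrow : ∀ k, HasSum (fun m => s ^ k * q k m (fun _ => y)) (g k (x₀ + y) * s ^ k) := by
      intro k
      rw [mul_comm]
      exact (hsum1 k y hy).mul_left _
    have htot := hSum.hasSum.prod_fiberwise hrow
    have hval : (∑' k, g k ((0, x₀) + (s, y) : ℝ × E).2 * ((0, x₀) + (s, y) : ℝ × E).1 ^ k) =
        ∑' ij : ℕ × ℕ, s ^ ij.1 * q ij.1 ij.2 (fun _ => y) := by
      simp only [Prod.mk_add_mk, zero_add]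
      exact htot.tsum_eq
    rw [hval]
    have h2 := (Finset.HasAntidiagonal.sigmaAntidiagonalEquivProd (A := ℕ)).hasSum_iff.2 hSum.hasSum
    have h3 := h2.sigma (fun N => hasSum_fintype _)
    suffices hfun : (fun N => P N (fun _ => (s, y))) = fun N =>
        ∑ c : Finset.HasAntidiagonal.antidiagonal N,
          s ^ (c : ℕ × ℕ).1 * q (c : ℕ × ℕ).1 (c : ℕ × ℕ).2 (fun _ => y) by
      rw [hfun]; exact h3
    funext N
    show fkP N q (fun _ => (s, y)) = _
    rw [fkP_diag]
    exact (Finset.sum_coe_sort (Finset.HasAntidiagonal.antidiagonal N)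
      (fun ij : ℕ × ℕ => s ^ ij.1 * q ij.1 ij.2 (fun _ => y))).symm
  · refine ⟨2 * M, L, hL0, ?_⟩
    filter_upwards [Metric.ball_mem_nhds x₀ hε] with x hx k
    have hy : ‖x - x₀‖ < ε := by rwa [Metric.mem_ball, dist_eq_norm] at hx
    have h1 := hsum1 k _ hy
    rw [add_sub_cancel] at h1
    obtain ⟨h2, h3⟩ := hgeom _ hy
    have h4 := h2.mul_left (M * L ^ k)
    have h5 := tsum_of_norm_bounded h4 (fun m => hterm k m (x - x₀))
    rw [h1.tsum_eq, Real.norm_eq_abs] at h5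
    refine h5.trans ?_
    calc M * L ^ k * (1 - ‖x - x₀‖ * L)⁻¹ ≤ M * L ^ k * 2 := by gcongr
      _ = _ := by ring

end FuchsSeries

section FuchsNumeric

theorem fk_sum_sq (N : ℕ) : ∑ i ∈ Finset.range (N + 1), 1 / ((i : ℝ) + 1) ^ 2 ≤
    2 - 1 / ((N : ℝ) + 1) := by
  induction N with
  | zero => norm_num
  | succ N ih =>
    rw [Finset.sum_range_succ]
    have h : 1 / ((N : ℝ) + 1 + 1) ^ 2 ≤ 1 / ((N : ℝ) + 1) - 1 / ((N : ℝ) + 1 + 1) := by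
      rw [div_sub_div _ _ (by positivity) (by positivity),
        div_le_div_iff₀ (by positivity) (by positivity)]
      nlinarith [(Nat.cast_nonneg N : (0:ℝ) ≤ N)]
    push_cast
    linarith

theorem fk_conv_sq (N : ℕ) : ∑ ij ∈ Finset.HasAntidiagonal.antidiagonal N,
    (1 / ((ij.1 : ℝ) + 1) ^ 2) * (1 / ((ij.2 : ℝ) + 1) ^ 2) ≤ 8 / ((N : ℝ) + 1) ^ 2 := by
  have h1 : ∀ ij ∈ Finset.HasAntidiagonal.antidiagonal N,
      (1 / ((ij.1 : ℝ) + 1) ^ 2) * (1 / ((ij.2 : ℝ) + 1) ^ 2) ≤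
      2 / ((N : ℝ) + 1) ^ 2 * (1 / ((ij.1 : ℝ) + 1) ^ 2 + 1 / ((ij.2 : ℝ) + 1) ^ 2) := by
    intro ij hij
    have hN : (N : ℝ) = ij.1 + ij.2 := by
      rw [Finset.HasAntidiagonal.mem_antidiagonal] at hij; exact_mod_cast hij.symm
    rw [hN]
    have hi : (0:ℝ) ≤ ij.1 := Nat.cast_nonneg _
    have hj : (0:ℝ) ≤ ij.2 := Nat.cast_nonneg _
    generalize (ij.1 : ℝ) = i at *
    generalize (ij.2 : ℝ) = j at *
    rw [div_add_div _ _ (by positivity) (by positivity), div_mul_div_comm, div_mul_div_comm,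
      div_le_div_iff₀ (by positivity) (by positivity)]
    have h2 : (i + j + 1) ^ 2 ≤ 2 * ((j + 1) ^ 2 + (i + 1) ^ 2) := by
      nlinarith [sq_nonneg (i - j)]
    have h3 : 0 ≤ (i + 1) ^ 2 * (j + 1) ^ 2 := by positivity
    nlinarith [mul_le_mul_of_nonneg_right h2 h3]
  refine (Finset.sum_le_sum h1).trans ?_
  rw [← Finset.mul_sum, Finset.sum_add_distrib]
  have h4 : ∑ ij ∈ Finset.HasAntidiagonal.antidiagonal N, 1 / ((ij.1 : ℝ) + 1) ^ 2 =
      ∑ i ∈ Finset.range (N + 1), 1 / ((i : ℝ) + 1) ^ 2 :=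
    Finset.Nat.sum_antidiagonal_eq_sum_range_succ (fun i _ => 1 / ((i : ℝ) + 1) ^ 2) N
  have h5 : ∑ ij ∈ Finset.HasAntidiagonal.antidiagonal N, 1 / ((ij.2 : ℝ) + 1) ^ 2 =
      ∑ ij ∈ Finset.HasAntidiagonal.antidiagonal N, 1 / ((ij.1 : ℝ) + 1) ^ 2 :=
    Finset.Nat.sum_antidiagonal_swap (f := fun ij : ℕ × ℕ => 1 / ((ij.1 : ℝ) + 1) ^ 2)
  rw [h5, h4]
  have h6 := fk_sum_sq N
  have h7 : (0:ℝ) ≤ 1 / ((N : ℝ) + 1) := by positivity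
  calc _ ≤ 2 / ((N : ℝ) + 1) ^ 2 * (2 + 2) := by gcongr <;> linarith
    _ = _ := by ring

/-- the majorant sequence -/
noncomputable def fkw (ρ : ℝ) (N : ℕ) : ℝ := N ! * ρ ^ N / ((N : ℝ) + 1) ^ 2

theorem fkw_nonneg {ρ : ℝ} (hρ : 0 ≤ ρ) (N : ℕ) : 0 ≤ fkw ρ N := by
  unfold fkw; positivity

theorem fkw_succ {ρ : ℝ} (hρ : 4 ≤ ρ) (N : ℕ) : fkw ρ N ≤ fkw ρ (N + 1) := by
  unfold fkw
  rw [div_le_div_iff₀ (by positivity) (by positivity), Nat.factorial_succ, pow_succ ρ N]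
  push_cast
  have h0 : (0:ℝ) ≤ N := Nat.cast_nonneg _
  have h1 : (0:ℝ) ≤ N ! * ρ ^ N := by positivity
  have h2 : ((N : ℝ) + 1 + 1) ^ 2 ≤ (N + 1) * ρ * (N + 1) ^ 2 := by
    have : ((N : ℝ) + 1 + 1) ^ 2 ≤ 4 * (N + 1) ^ 2 := by nlinarith
    have h3 : (4:ℝ) ≤ (N + 1) * ρ := by nlinarith
    nlinarith [sq_nonneg ((N : ℝ) + 1)]
  nlinarith [mul_le_mul_of_nonneg_left h2 h1]

theorem fkw_conv0 {ρ : ℝ} (hρ : 0 ≤ ρ) (N : ℕ) :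
    ∑ ij ∈ Finset.HasAntidiagonal.antidiagonal N,
      (N.choose ij.1 : ℝ) * (fkw ρ ij.1 * fkw ρ ij.2) ≤ 8 * fkw ρ N := by
  have h1 : ∀ ij ∈ Finset.HasAntidiagonal.antidiagonal N,
      (N.choose ij.1 : ℝ) * (fkw ρ ij.1 * fkw ρ ij.2) =
      N ! * ρ ^ N * ((1 / ((ij.1 : ℝ) + 1) ^ 2) * (1 / ((ij.2 : ℝ) + 1) ^ 2)) := by
    intro ij hij
    rw [Finset.HasAntidiagonal.mem_antidiagonal] at hij
    subst hij
    have := Nat.add_choose_mul_factorial_mul_factorial ij.1 ij.2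
    have h2 : ((ij.1 + ij.2).choose ij.1 : ℝ) * ij.1 ! * ij.2 ! = (ij.1 + ij.2)! := by
      rw [Nat.choose_symm_add]; exact_mod_cast this
    unfold fkw
    rw [← h2, pow_add]
    ring
  rw [Finset.sum_congr rfl h1, ← Finset.mul_sum]
  have := fk_conv_sq N
  calc _ ≤ N ! * ρ ^ N * (8 / ((N : ℝ) + 1) ^ 2) := by gcongr
    _ = _ := by unfold fkw; ring

theorem fkw_conv {ρ : ℝ} (hρ : 0 ≤ ρ) (N p q : ℕ) :
    ∑ ij ∈ Finset.HasAntidiagonal.antidiagonal N,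
      (N.choose ij.1 : ℝ) * (fkw ρ (ij.1 + p) * fkw ρ (ij.2 + q)) ≤
      8 * fkw ρ (N + (p + q)) := by
  refine le_trans ?_ (fkw_conv0 hρ (N + (p + q)))
  have hinj : Set.InjOn (fun ij : ℕ × ℕ => (ij.1 + p, ij.2 + q))
      (Finset.HasAntidiagonal.antidiagonal N : Finset (ℕ × ℕ)) := by
    intro a _ b _ h
    simp only [Prod.mk.injEq, add_left_inj] at h
    exact Prod.ext h.1 h.2
  have hch : ∀ i, N.choose i ≤ (N + (p + q)).choose (i + p) := by
    intro i
    calc N.choose i ≤ (N + p).choose (i + p) := by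
          clear hinj
          induction p with
          | zero => simp
          | succ p ih =>
            rw [← add_assoc, ← add_assoc, Nat.choose_succ_succ]; omega
      _ ≤ _ := Nat.choose_le_choose _ (by omega)
  calc _ ≤ ∑ ij ∈ Finset.HasAntidiagonal.antidiagonal N,
      ((N + (p + q)).choose (ij.1 + p) : ℝ) * (fkw ρ (ij.1 + p) * fkw ρ (ij.2 + q)) := by
        refine Finset.sum_le_sum fun ij _ => ?_
        have := fkw_nonneg hρ (ij.1 + p)
        have := fkw_nonneg hρ (ij.2 + q)
        gcongr
        exact hch _
    _ = ∑ ij ∈ (Finset.HasAntidiagonal.antidiagonal N).image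
        (fun ij : ℕ × ℕ => (ij.1 + p, ij.2 + q)),
        ((N + (p + q)).choose ij.1 : ℝ) * (fkw ρ ij.1 * fkw ρ ij.2) := by
        rw [Finset.sum_image hinj]
    _ ≤ _ := by
        refine Finset.sum_le_sum_of_subset_of_nonneg ?_ fun ij _ _ => ?_
        · intro ij hij
          simp only [Finset.mem_image, Finset.HasAntidiagonal.mem_antidiagonal] at hij ⊢
          obtain ⟨a, ha, rfl⟩ := hij
          simp only; omega
        · have := fkw_nonneg hρ ij.1
          have := fkw_nonneg hρ ij.2
          positivity

theorem fk_vandermonde (k m : ℕ) : ∀ F : ℕ → ℕ → ℝ,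
    ∑ ij ∈ Finset.HasAntidiagonal.antidiagonal k, (k.choose ij.1 : ℝ) *
      ∑ pq ∈ Finset.HasAntidiagonal.antidiagonal m, (m.choose pq.1 : ℝ) *
        F (ij.1 + pq.1) (ij.2 + pq.2) =
    ∑ ij ∈ Finset.HasAntidiagonal.antidiagonal (k + m), ((k + m).choose ij.1 : ℝ) *
      F ij.1 ij.2 := by
  induction k with
  | zero => intro F; simp
  | succ k ih =>
    intro F
    have h1 := Finset.sum_antidiagonal_choose_succ_mul (R := ℝ) (fun i j =>
      ∑ pq ∈ Finset.HasAntidiagonal.antidiagonal m, (m.choose pq.1 : ℝ) *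
        F (i + pq.1) (j + pq.2)) k
    rw [h1]
    have h2 := Finset.sum_antidiagonal_choose_succ_mul (R := ℝ) F (k + m)
    rw [show k + 1 + m = k + m + 1 by ring, h2]
    congr 1
    · rw [← ih (fun i j => F i (j + 1))]
      refine Finset.sum_congr rfl fun ij _ => ?_
      congr 1
      refine Finset.sum_congr rfl fun pq _ => ?_
      rw [show ij.2 + 1 + pq.2 = ij.2 + pq.2 + 1 by ring]
    · have h3 := ih (fun i j => F (i + 1) j)
      refine Eq.trans (Finset.sum_congr rfl fun ij hij => ?_) (h3.trans ?_)
      · congr 1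
        · rw [Finset.HasAntidiagonal.mem_antidiagonal] at hij
          rw [← hij]; first | rfl | exact_mod_cast (Nat.choose_symm_add).symm
        · refine Finset.sum_congr rfl fun pq _ => ?_
          rw [show ij.1 + 1 + pq.1 = ij.1 + pq.1 + 1 by ring]
      · refine Finset.sum_congr rfl fun ij hij => ?_
        congr 1
        rw [Finset.HasAntidiagonal.mem_antidiagonal] at hij
        rw [← hij]; first | rfl | exact_mod_cast (Nat.choose_symm_add)

end FuchsNumeric

section FuchsSeq

variable {E : Type*} [NormedAddCommGroup E] [NormedSpace ℝ E]

/-- binomial convolution of sequences of functions -/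
noncomputable def fkC (A B : ℕ → E → ℝ) : ℕ → E → ℝ := fun k x =>
  ∑ ij ∈ Finset.HasAntidiagonal.antidiagonal k, (k.choose ij.1 : ℝ) * (A ij.1 x * B ij.2 x)

/-- bounds for the first terms of a sequence of functions -/
def fkB (K : ℕ) (x : E) (lam ρ c : ℝ) (p : ℕ) (A : ℕ → E → ℝ) : Prop :=
  ∀ k ≤ K, AnalyticAt ℝ (A k) x ∧ ∀ m, ‖iteratedFDeriv ℝ m (A k) x‖ ≤
    lam ^ k * (c * fkw ρ (k + m + p))

theorem fkB_mono {K K' : ℕ} {x : E} {lam ρ c : ℝ} {p : ℕ} {A : ℕ → E → ℝ} (hK : K' ≤ K)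
    (h : fkB K x lam ρ c p A) : fkB K' x lam ρ c p A := fun k hk => h k (hk.trans hK)

theorem fkB_mono_c {K : ℕ} {x : E} {lam ρ c c' : ℝ} {p : ℕ} {A : ℕ → E → ℝ} (hl : 0 ≤ lam)
    (hρ : 0 ≤ ρ) (hc : c ≤ c')
    (h : fkB K x lam ρ c p A) : fkB K x lam ρ c' p A := fun k hk => by
  refine ⟨(h k hk).1, fun m => ((h k hk).2 m).trans ?_⟩
  have := fkw_nonneg hρ (k + m + p)
  gcongr

theorem fkB_mono_p {K : ℕ} {x : E} {lam ρ c : ℝ} {p : ℕ} {A : ℕ → E → ℝ} (hl : 0 ≤ lam)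
    (hρ : 4 ≤ ρ) (hc : 0 ≤ c)
    (h : fkB K x lam ρ c p A) : fkB K x lam ρ c (p + 1) A := fun k hk => by
  refine ⟨(h k hk).1, fun m => ((h k hk).2 m).trans ?_⟩
  have := fkw_succ hρ (k + m + p)
  rw [← add_assoc (k + m)]
  gcongr

theorem fkB_shift {K : ℕ} {x : E} {lam ρ c : ℝ} {p : ℕ} {A : ℕ → E → ℝ}
    (h : fkB (K + 1) x lam ρ c p A) :
    fkB K x lam ρ (lam * c) (p + 1) (fun k => A (k + 1)) := fun k hk => by
  refine ⟨(h (k + 1) (by omega)).1, fun m => ((h (k + 1) (by omega)).2 m).trans (le_of_eq ?_)⟩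
  rw [show k + 1 + m + p = k + m + (p + 1) by ring]
  ring

theorem fkB_dx {K : ℕ} {x : E} {lam ρ c : ℝ} {p : ℕ} {A : ℕ → E → ℝ} {e : E} (he : ‖e‖ ≤ 1)
    (h : fkB K x lam ρ c p A) : fkB K x lam ρ c (p + 1) (fun k => fkD e (A k)) := fun k hk => by
  refine ⟨fkD_analyticAt (h k hk).1, fun m => ?_⟩
  refine (fkD_norm_le (h k hk).1 he m).trans (((h k hk).2 (m + 1)).trans (le_of_eq ?_))
  rw [show k + (m + 1) + p = k + m + (p + 1) by ring]

theorem fkB_add {K : ℕ} {x : E} {lam ρ c c' : ℝ} {p : ℕ} {A B : ℕ → E → ℝ}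
    (h : fkB K x lam ρ c p A) (h' : fkB K x lam ρ c' p B) :
    fkB K x lam ρ (c + c') p (fun k y => A k y + B k y) := fun k hk => by
  refine ⟨(h k hk).1.fun_add (h' k hk).1, fun m => ?_⟩
  refine (fk_norm_add_le (h k hk).1 (h' k hk).1 m).trans
    ((add_le_add ((h k hk).2 m) ((h' k hk).2 m)).trans (le_of_eq (by ring)))

theorem fkB_sum {ι : Type*} [Fintype ι] {K : ℕ} {x : E} {lam ρ c : ℝ} {p : ℕ}
    {A : ι → ℕ → E → ℝ} (h : ∀ i, fkB K x lam ρ c p (A i)) :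
    fkB K x lam ρ (Fintype.card ι * c) p (fun k y => ∑ i, A i k y) := fun k hk => by
  refine ⟨Finset.analyticAt_fun_sum _ fun i _ => (h i k hk).1, fun m => ?_⟩
  refine (fk_norm_sum_le _ (fun i _ => (h i k hk).1) m).trans
    ((Finset.sum_le_sum fun i _ => (h i k hk).2 m).trans (le_of_eq ?_))
  rw [Finset.sum_const, Finset.card_univ, nsmul_eq_mul]; ring

theorem fkC_analyticAt {A B : ℕ → E → ℝ} {k : ℕ} {x : E} (hA : ∀ j ≤ k, AnalyticAt ℝ (A j) x)
    (hB : ∀ j ≤ k, AnalyticAt ℝ (B j) x) : AnalyticAt ℝ (fkC A B k) x := by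
  unfold fkC
  refine Finset.analyticAt_fun_sum _ fun ij hij => ?_
  rw [Finset.HasAntidiagonal.mem_antidiagonal] at hij
  exact analyticAt_const.fun_mul ((hA _ (by omega)).fun_mul (hB _ (by omega)))

theorem fkB_mul {K : ℕ} {x : E} {lam ρ c c' : ℝ} {p q : ℕ} {A B : ℕ → E → ℝ}
    (hl : 0 ≤ lam) (hρ : 0 ≤ ρ) (hc : 0 ≤ c) (hc' : 0 ≤ c')
    (h : fkB K x lam ρ c p A) (h' : fkB K x lam ρ c' q B) :
    fkB K x lam ρ (8 * c * c') (p + q) (fkC A B) := fun k hk => by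
  have hA : ∀ j ≤ k, AnalyticAt ℝ (A j) x := fun j hj => (h j (hj.trans hk)).1
  have hB : ∀ j ≤ k, AnalyticAt ℝ (B j) x := fun j hj => (h' j (hj.trans hk)).1
  refine ⟨fkC_analyticAt hA hB, fun m => ?_⟩
  have hAB : ∀ ij ∈ Finset.HasAntidiagonal.antidiagonal k,
      AnalyticAt ℝ (fun y => A ij.1 y * B ij.2 y) x := by
    intro ij hij
    rw [Finset.HasAntidiagonal.mem_antidiagonal] at hij
    exact (hA _ (by omega)).fun_mul (hB _ (by omega))
  unfold fkC
  refine (fk_norm_sum_le _ (fun ij hij => analyticAt_const.fun_mul (hAB ij hij)) m).trans ?_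
  have h1 : ∀ ij ∈ Finset.HasAntidiagonal.antidiagonal k,
      ‖iteratedFDeriv ℝ m (fun y => (k.choose ij.1 : ℝ) * (A ij.1 y * B ij.2 y)) x‖ ≤
      lam ^ k * (c * c') * ((k.choose ij.1 : ℝ) *
        ∑ pq ∈ Finset.HasAntidiagonal.antidiagonal m, (m.choose pq.1 : ℝ) *
          (fkw ρ (ij.1 + pq.1 + p) * fkw ρ (ij.2 + pq.2 + q))) := by
    intro ij hij
    rw [fk_norm_const_mul (hAB ij hij), Nat.abs_cast]
    rw [Finset.HasAntidiagonal.mem_antidiagonal] at hij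
    have h2 := fk_norm_mul_le (hA ij.1 (by omega)) (hB ij.2 (by omega)) m
    rw [← Finset.Nat.sum_antidiagonal_eq_sum_range_succ (fun i j => (m.choose i : ℝ) *
      ‖iteratedFDeriv ℝ i (A ij.1) x‖ * ‖iteratedFDeriv ℝ j (B ij.2) x‖) m] at h2
    have h3 : ∀ pq ∈ Finset.HasAntidiagonal.antidiagonal m, (m.choose pq.1 : ℝ) *
        ‖iteratedFDeriv ℝ pq.1 (A ij.1) x‖ * ‖iteratedFDeriv ℝ pq.2 (B ij.2) x‖ ≤
        lam ^ k * (c * c') * ((m.choose pq.1 : ℝ) *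
          (fkw ρ (ij.1 + pq.1 + p) * fkw ρ (ij.2 + pq.2 + q))) := by
      intro pq _
      have h4 := (h ij.1 (by omega)).2 pq.1
      have h5 := (h' ij.2 (by omega)).2 pq.2
      have h6 := fkw_nonneg hρ (ij.1 + pq.1 + p)
      calc _ ≤ (m.choose pq.1 : ℝ) * (lam ^ ij.1 * (c * fkw ρ (ij.1 + pq.1 + p))) *
            (lam ^ ij.2 * (c' * fkw ρ (ij.2 + pq.2 + q))) := by gcongr
        _ = _ := by rw [← hij, pow_add]; ring
    have h7 := h2.trans (Finset.sum_le_sum h3)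
    rw [← Finset.mul_sum] at h7
    calc _ ≤ (k.choose ij.1 : ℝ) * _ := mul_le_mul_of_nonneg_left h7 (Nat.cast_nonneg _)
      _ = _ := by ring
  refine (Finset.sum_le_sum h1).trans ?_
  rw [← Finset.mul_sum, fk_vandermonde k m (fun i j => fkw ρ (i + p) * fkw ρ (j + q))]
  calc _ ≤ lam ^ k * (c * c') * (8 * fkw ρ (k + m + (p + q))) := by
        gcongr
        exact fkw_conv hρ (k + m) p q
    _ = _ := by ring

theorem fkB_coef {f : ℝ × E → ℝ} {x : E} (hf : AnalyticAt ℝ f (0, x)) :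
    ∀ᶠ P : ℝ × ℝ in atTop, ∀ K lam, 1 ≤ lam → fkB K x lam P.2 P.1 0 (fun k => fkT k f) := by
  obtain ⟨C, L, hC, hL, hb⟩ := fkT_cauchy hf
  filter_upwards [eventually_ge_atTop (C, 4 * L)] with P hP K lam hlam k _
  obtain ⟨hP1, hP2⟩ : C ≤ P.1 ∧ 4 * L ≤ P.2 := hP
  refine ⟨fkT_analyticAt hf k, fun m => (hb k m).trans ?_⟩
  rw [add_zero]
  have h1 : (1:ℝ) ≤ lam ^ k := one_le_pow₀ hlam
  generalize k + m = N
  have h2 : C * N ! * L ^ N ≤ P.1 * fkw P.2 N := by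
    unfold fkw
    have h3 : ((N : ℝ) + 1) ^ 2 ≤ 4 ^ N := by
      have h : N + 1 ≤ 2 ^ N := Nat.lt_two_pow_self
      have h' : (N : ℝ) + 1 ≤ 2 ^ N := by exact_mod_cast h
      calc ((N : ℝ) + 1) ^ 2 ≤ (2 ^ N) ^ 2 := by gcongr
        _ = 4 ^ N := by rw [← pow_mul, mul_comm, pow_mul]; norm_num
    have h4 : L ^ N * ((N : ℝ) + 1) ^ 2 ≤ P.2 ^ N := by
      calc L ^ N * ((N : ℝ) + 1) ^ 2 ≤ L ^ N * 4 ^ N := by gcongr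
        _ = (4 * L) ^ N := by rw [mul_pow]; ring
        _ ≤ _ := by gcongr
    rw [mul_div_assoc', le_div_iff₀ (by positivity)]
    calc C * N ! * L ^ N * ((N : ℝ) + 1) ^ 2 = C * (N ! * (L ^ N * ((N : ℝ) + 1) ^ 2)) := by ring
      _ ≤ P.1 * (N ! * P.2 ^ N) := by gcongr; linarith
  have h5 : 0 ≤ P.1 * fkw P.2 N := le_trans (by positivity) h2
  nlinarith

theorem fk_rec (Step : (ℕ → E → ℝ) → ℕ → E → ℝ)
    (hS : ∀ G G' k, (∀ j ≤ k, G j = G' j) → Step G k = Step G' k) :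
    ∃ G : ℕ → E → ℝ, G 0 = (fun _ => 0) ∧ ∀ k, G (k + 1) = Step G k := by
  let S : ℕ → ℕ → E → ℝ := fun k => Nat.rec (fun _ _ => 0)
    (fun k Sk => fun j => if j ≤ k then Sk j else Step Sk k) k
  have hS1 : ∀ k j, S (k + 1) j = if j ≤ k then S k j else Step (S k) k := fun _ _ => rfl
  have hst : ∀ k j, j ≤ k → S k j = S j j := by
    intro k
    induction k with
    | zero => intro j hj; obtain rfl : j = 0 := by omega
              rfl
    | succ k ih =>
      intro j hj
      rcases Nat.lt_or_ge k j with h | h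
      · obtain rfl : j = k + 1 := by omega
        rfl
      · rw [hS1, if_pos h, ih j h]
  refine ⟨fun k => S k k, rfl, fun k => ?_⟩
  show S (k + 1) (k + 1) = _
  rw [hS1, if_neg (by omega)]
  exact hS _ _ _ fun j hj => hst k j hj

end FuchsSeq

section FuchsThm

variable {E : Type*} [NormedAddCommGroup E] [NormedSpace ℝ E] {n : ℕ}

/-- the derivations on sequences -/
noncomputable def fkd (e : Fin n → E) (μ : Fin (n + 1)) (G : ℕ → E → ℝ) : ℕ → E → ℝ :=
  Fin.cases (motive := fun _ => ℕ → E → ℝ) (fun k => G (k + 1)) (fun i k => fkD (e i) (G k)) μ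

/-- the coordinate directions -/
noncomputable def fkv (e : Fin n → E) (μ : Fin (n + 1)) : ℝ × E :=
  Fin.cases (motive := fun _ => ℝ × E) (1, 0) (fun i => (0, e i)) μ

/-- the sequence of the nonlinear part -/
noncomputable def fkHs (e : Fin n → E) (A : Fin n → Fin (n + 1) → ℝ × E → ℝ)
    (c : Fin (n + 1) → Fin (n + 1) → ℝ × E → ℝ) (γ : Fin (n + 1) → ℝ × E → ℝ)
    (G : ℕ → E → ℝ) : ℕ → E → ℝ := fun k x =>
  (∑ i, ∑ μ, fkC (fun k => fkT k (A i μ)) (fun k => fkD (e i) (fkd e μ G k)) k x +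
  ∑ μ, ∑ ν, fkC (fun k => fkT k (c μ ν)) (fkC (fkd e μ G) (fkd e ν G)) k x) +
  ∑ μ, fkC (fun k => fkT k (γ μ)) (fkd e μ G) k x

/-- the sequence of the lower order part -/
noncomputable def fkQs (e : Fin n → E) (δ : Fin n → ℝ × E → ℝ) (g : ℝ × E → ℝ)
    (G : ℕ → E → ℝ) : ℕ → E → ℝ := fun k x =>
  ∑ i, fkC (fun k => fkT k (δ i)) (fun k => fkD (e i) (G k)) k x + fkT k g x

/-- the nonlinear part -/
noncomputable def fkHF (e : Fin n → E) (A : Fin n → Fin (n + 1) → ℝ × E → ℝ)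
    (c : Fin (n + 1) → Fin (n + 1) → ℝ × E → ℝ) (γ : Fin (n + 1) → ℝ × E → ℝ)
    (W : ℝ × E → ℝ) : ℝ × E → ℝ := fun z =>
  (∑ i, ∑ μ, A i μ z * fkD (0, e i) (fkD (fkv e μ) W) z +
  ∑ μ, ∑ ν, c μ ν z * (fkD (fkv e μ) W z * fkD (fkv e ν) W z)) +
  ∑ μ, γ μ z * fkD (fkv e μ) W z

/-- the lower order part -/
noncomputable def fkQF (e : Fin n → E) (δ : Fin n → ℝ × E → ℝ) (g : ℝ × E → ℝ)
    (W : ℝ × E → ℝ) : ℝ × E → ℝ := fun z =>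
  ∑ i, δ i z * fkD (0, e i) W z + g z

theorem fkB_d {e : Fin n → E} (he : ∀ i, ‖e i‖ ≤ 1) {K : ℕ} {x : E} {lam ρ c : ℝ} {p : ℕ}
    {G : ℕ → E → ℝ} (hl : 1 ≤ lam) (hρ : 0 ≤ ρ) (hc : 0 ≤ c) (h : fkB (K + 1) x lam ρ c p G)
    (μ : Fin (n + 1)) : fkB K x lam ρ (lam * c) (p + 1) (fkd e μ G) := by
  refine Fin.cases ?_ (fun i => ?_) μ
  · exact fkB_shift h
  · exact fkB_mono_c (by linarith) hρ (by nlinarith) (fkB_dx (he i) (fkB_mono (Nat.le_succ K) h))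

theorem fkC_congr {A B A' B' : ℕ → E → ℝ} {k : ℕ} (hA : ∀ j ≤ k, A j = A' j)
    (hB : ∀ j ≤ k, B j = B' j) : fkC A B k = fkC A' B' k := by
  funext x
  refine Finset.sum_congr rfl fun ij hij => ?_
  rw [Finset.HasAntidiagonal.mem_antidiagonal] at hij
  rw [hA _ (by omega), hB _ (by omega)]

theorem fkd_congr {e : Fin n → E} {G G' : ℕ → E → ℝ} {k : ℕ} (h : ∀ j ≤ k + 1, G j = G' j)
    (μ : Fin (n + 1)) : ∀ j ≤ k, fkd e μ G j = fkd e μ G' j := by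
  intro j hj
  refine Fin.cases ?_ (fun i => ?_) μ
  · exact h (j + 1) (by omega)
  · show fkD (e i) (G j) = fkD (e i) (G' j)
    rw [h j (by omega)]

theorem fkHs_congr {e : Fin n → E} {A : Fin n → Fin (n + 1) → ℝ × E → ℝ}
    {c : Fin (n + 1) → Fin (n + 1) → ℝ × E → ℝ} {γ : Fin (n + 1) → ℝ × E → ℝ}
    {G G' : ℕ → E → ℝ} {k : ℕ} (h : ∀ j ≤ k + 1, G j = G' j) :
    fkHs e A c γ G k = fkHs e A c γ G' k := by
  have hd := fkd_congr (e := e) h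
  funext x
  unfold fkHs
  congr 1
  · congr 1
    · refine Finset.sum_congr rfl fun i _ => Finset.sum_congr rfl fun μ _ => ?_
      refine congrFun (fkC_congr (fun _ _ => rfl) fun j hj => ?_) x
      simp only [hd μ j hj]
    · refine Finset.sum_congr rfl fun μ _ => Finset.sum_congr rfl fun ν _ => ?_
      refine congrFun (fkC_congr (fun _ _ => rfl) fun j hj => ?_) x
      exact fkC_congr (fun i hi => hd μ i (hi.trans hj)) (fun i hi => hd ν i (hi.trans hj))
  · refine Finset.sum_congr rfl fun μ _ => ?_
    exact congrFun (fkC_congr (fun _ _ => rfl) fun j hj => hd μ j hj) x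

theorem fkQs_congr {e : Fin n → E} {δ : Fin n → ℝ × E → ℝ} {g : ℝ × E → ℝ}
    {G G' : ℕ → E → ℝ} {k : ℕ} (h : ∀ j ≤ k, G j = G' j) :
    fkQs e δ g G k = fkQs e δ g G' k := by
  funext x
  unfold fkQs
  congr 1
  refine Finset.sum_congr rfl fun i _ => ?_
  refine congrFun (fkC_congr (fun _ _ => rfl) fun j hj => ?_) x
  simp only [h j hj]

theorem fk_exists_seq (e : Fin n → E) (A : Fin n → Fin (n + 1) → ℝ × E → ℝ)
    (c : Fin (n + 1) → Fin (n + 1) → ℝ × E → ℝ) (γ : Fin (n + 1) → ℝ × E → ℝ)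
    (δ : Fin n → ℝ × E → ℝ) (g : ℝ × E → ℝ) :
    ∃ G : ℕ → E → ℝ, G 0 = (fun _ => 0) ∧ ∀ k, G (k + 1) = fun x =>
      ((k : ℝ) + 2)⁻¹ * ((k : ℝ) * fkHs e A c γ G (k - 1) x + fkQs e δ g G k x) := by
  refine fk_rec (fun G k x =>
      ((k : ℝ) + 2)⁻¹ * ((k : ℝ) * fkHs e A c γ G (k - 1) x + fkQs e δ g G k x)) ?_
  intro G G' k h
  funext x
  rw [fkQs_congr h]
  rcases k with _ | k
  · simp
  · rw [Nat.add_sub_cancel, fkHs_congr h]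

set_option maxHeartbeats 2000000 in
theorem fk_seq_bound {e : Fin n → E} (he : ∀ i, ‖e i‖ ≤ 1)
    {A : Fin n → Fin (n + 1) → ℝ × E → ℝ}
    {c : Fin (n + 1) → Fin (n + 1) → ℝ × E → ℝ} {γ : Fin (n + 1) → ℝ × E → ℝ}
    {δ : Fin n → ℝ × E → ℝ} {g : ℝ × E → ℝ} {x : E}
    (hA : ∀ i μ, AnalyticAt ℝ (A i μ) (0, x)) (hc : ∀ μ ν, AnalyticAt ℝ (c μ ν) (0, x))
    (hγ : ∀ μ, AnalyticAt ℝ (γ μ) (0, x)) (hδ : ∀ i, AnalyticAt ℝ (δ i) (0, x))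
    (hg : AnalyticAt ℝ g (0, x)) {G : ℕ → E → ℝ} (hG0 : G 0 = fun _ => 0)
    (hG : ∀ k, G (k + 1) = fun x =>
      ((k : ℝ) + 2)⁻¹ * ((k : ℝ) * fkHs e A c γ G (k - 1) x + fkQs e δ g G k x)) :
    ∃ lam ρ M : ℝ, 1 ≤ lam ∧ 1 ≤ ρ ∧ 0 ≤ M ∧ ∀ K, fkB K x lam ρ M 0 G := by
  have hev := (((eventually_all.2 fun i => eventually_all.2 fun μ => fkB_coef (hA i μ)).and
    (eventually_all.2 fun μ => eventually_all.2 fun ν => fkB_coef (hc μ ν))).and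
    ((eventually_all.2 fun μ => fkB_coef (hγ μ)).and
    ((eventually_all.2 fun i => fkB_coef (hδ i)).and (fkB_coef hg)))).and
    (eventually_ge_atTop ((1, 4) : ℝ × ℝ))
  obtain ⟨⟨C, ρ⟩, ⟨⟨bA, bc⟩, bγ, bδ, bg⟩, hP⟩ := hev.exists
  obtain ⟨hC, hρ⟩ : 1 ≤ C ∧ 4 ≤ ρ := hP
  simp only at bA bc bγ bδ bg
  set P : ℝ := ((n : ℝ) + 1) ^ 2 * C with hPdef
  have hn : (0:ℝ) ≤ n := Nat.cast_nonneg n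
  have hP1 : 1 ≤ P := by
    have : (1:ℝ) ≤ ((n : ℝ) + 1) ^ 2 := by nlinarith
    nlinarith
  set M : ℝ := 1 / (256 * P) with hM
  have hM0 : 0 < M := by positivity
  have hPM : 256 * P * M = 1 := by rw [hM]; field_simp
  set lam : ℝ := 64 * P + 256 * P * C + 1 with hlam
  have hl1 : 1 ≤ lam := by rw [hlam]; nlinarith
  have hl0 : 0 ≤ lam := by linarith
  have hρ0 : 0 ≤ ρ := by linarith
  have hC0 : 0 ≤ C := by linarith
  have hlM : 0 ≤ lam * M := by positivity
  refine ⟨lam, ρ, M, hl1, by linarith, hM0.le, fun K => ?_⟩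
  induction K with
  | zero =>
    intro k hk
    obtain rfl : k = 0 := by omega
    rw [hG0]
    refine ⟨analyticAt_const, fun m => ?_⟩
    rw [fk_norm_zero]
    have := fkw_nonneg hρ0 (0 + m + 0)
    positivity
  | succ K ih =>
    intro k hk
    rcases Nat.lt_or_ge K k with hlt | hle
    swap
    · exact ih k hle
    obtain rfl : k = K + 1 := by omega
    have hQ : fkB K x lam ρ (lam * M) 1 (fkQs e δ g G) := by
      have h1 : ∀ i, fkB K x lam ρ (8 * C * M) (0 + 1)
          (fkC (fun k => fkT k (δ i)) (fun k => fkD (e i) (G k))) := fun i =>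
        fkB_mul hl0 hρ0 hC0 hM0.le (bδ i K lam hl1) (fkB_dx (he i) ih)
      have h2 := fkB_add (fkB_sum h1) (fkB_mono_p hl0 hρ hC0 (bg K lam hl1))
      refine fkB_mono_c hl0 hρ0 ?_ h2
      rw [Fintype.card_fin]
      have h3 : (n : ℝ) * C ≤ P := by rw [hPdef]; nlinarith
      have h4 : lam * M = 64 * P * M + C * (256 * P * M) + M := by rw [hlam]; ring
      rw [hPM] at h4
      rw [h4]
      have : (n : ℝ) * C * M ≤ P * M := by gcongr
      nlinarith [mul_pos (lt_of_lt_of_le one_pos hP1) hM0]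
    have hH : ∀ K', K' + 1 ≤ K → fkB K' x lam ρ (lam ^ 2 * M) 2 (fkHs e A c γ G) := by
      intro K' hK'
      have ih' := fkB_mono hK' ih
      have hd := fkB_d he hl1 hρ0 hM0.le ih'
      have h1 : ∀ i μ, fkB K' x lam ρ (8 * C * (lam * M)) 2
          (fkC (fun k => fkT k (A i μ)) (fun k => fkD (e i) (fkd e μ G k))) := fun i μ => by
        have hh := fkB_mul hl0 hρ0 hC0 hlM (bA i μ K' lam hl1) (fkB_dx (he i) (hd μ))
        exact hh
      have h2 : ∀ μ ν, fkB K' x lam ρ (8 * C * (8 * (lam * M) * (lam * M))) 2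
          (fkC (fun k => fkT k (c μ ν)) (fkC (fkd e μ G) (fkd e ν G))) := fun μ ν => by
        have hh := fkB_mul hl0 hρ0 hC0 (by positivity) (bc μ ν K' lam hl1)
          (fkB_mul hl0 hρ0 hlM hlM (hd μ) (hd ν))
        exact hh
      have h3 : ∀ μ, fkB K' x lam ρ (8 * C * (lam * M)) 2
          (fkC (fun k => fkT k (γ μ)) (fkd e μ G)) := fun μ => by
        have hh := fkB_mono_p hl0 hρ (by positivity)
          (fkB_mul hl0 hρ0 hC0 hlM (bγ μ K' lam hl1) (hd μ))
        exact hh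
      have s1 := fkB_sum (A := fun i k y => ∑ μ, fkC (fun k => fkT k (A i μ))
        (fun k => fkD (e i) (fkd e μ G k)) k y) fun i => fkB_sum (h1 i)
      have s2 := fkB_sum (A := fun μ k y => ∑ ν, fkC (fun k => fkT k (c μ ν))
        (fkC (fkd e μ G) (fkd e ν G)) k y) fun μ => fkB_sum (h2 μ)
      have s3 := fkB_sum h3
      have h4 := fkB_add (fkB_add s1 s2) s3
      refine fkB_mono_c hl0 hρ0 ?_ h4
      simp only [Fintype.card_fin]
      push_cast
      have e1 : (n : ℝ) * ((n + 1) * (8 * C * (lam * M))) ≤ 8 * P * (lam * M) := by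
        rw [hPdef]
        have : (n : ℝ) * (n + 1) ≤ (n + 1) ^ 2 := by nlinarith
        have h0 : 0 ≤ 8 * C * (lam * M) := by positivity
        nlinarith [mul_le_mul_of_nonneg_right this h0]
      have e2 : ((n : ℝ) + 1) * (8 * C * (lam * M)) ≤ 8 * P * (lam * M) := by
        rw [hPdef]
        have : ((n : ℝ) + 1) ≤ (n + 1) ^ 2 := by nlinarith
        have h0 : 0 ≤ 8 * C * (lam * M) := by positivity
        nlinarith [mul_le_mul_of_nonneg_right this h0]
      have e3 : ((n : ℝ) + 1) * ((n + 1) * (8 * C * (8 * (lam * M) * (lam * M)))) =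
          (256 * P * M) * (lam ^ 2 * M / 4) := by rw [hPdef]; ring
      rw [hPM] at e3
      have e4 : 64 * P ≤ lam := by rw [hlam]; nlinarith
      have e5 : 64 * P * (lam * M) ≤ lam * (lam * M) := by gcongr
      have e6 : 0 ≤ lam * (lam * M) := by positivity
      have e7 : lam ^ 2 * M = lam * (lam * M) := by ring
      rw [e7] at e3 ⊢
      linarith
    have hQK := hQ K le_rfl
    have hk2 : (0:ℝ) < (K : ℝ) + 2 := by positivity
    rw [hG K]
    rcases K with _ | K
    · simp only [Nat.cast_zero, zero_mul, zero_add]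
      refine ⟨analyticAt_const.fun_mul hQK.1, fun m => ?_⟩
      rw [fk_norm_const_mul hQK.1]
      have h1 := hQK.2 m
      have h2 := fkw_nonneg hρ0 (0 + m + 1)
      have h3 : |(2:ℝ)⁻¹| ≤ 1 := by rw [abs_of_pos (by norm_num)]; norm_num
      calc _ ≤ 1 * _ := mul_le_mul h3 h1 (norm_nonneg _) zero_le_one
        _ = _ := by rw [show 0 + m + 1 = 1 + m + 0 by ring]; ring
    · have hHK := hH K le_rfl K le_rfl
      rw [Nat.add_sub_cancel]
      have han1 : AnalyticAt ℝ (fun y => ((K + 1 : ℕ) : ℝ) * fkHs e A c γ G K y) x :=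
        analyticAt_const.fun_mul hHK.1
      have han := han1.fun_add hQK.1
      refine ⟨analyticAt_const.fun_mul han, fun m => ?_⟩
      rw [fk_norm_const_mul han, abs_of_pos (by positivity), inv_mul_le_iff₀ hk2]
      refine (fk_norm_add_le han1 hQK.1 m).trans ?_
      rw [fk_norm_const_mul hHK.1, abs_of_nonneg (by positivity)]
      have h1 := hHK.2 m
      have h2 := hQK.2 m
      have h3 := fkw_nonneg hρ0 (K + m + 2)
      rw [show K + 1 + m + 1 = K + m + 2 by ring] at h2
      rw [show K + 1 + 1 + m + 0 = K + m + 2 by ring]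
      calc _ ≤ ((K + 1 : ℕ) : ℝ) * (lam ^ K * (lam ^ 2 * M * fkw ρ (K + m + 2))) +
            lam ^ (K + 1) * (lam * M * fkw ρ (K + m + 2)) := by gcongr
        _ = ((K + 1 : ℕ) + 1 : ℝ) * (lam ^ (K + 1 + 1) * (M * fkw ρ (K + m + 2))) := by ring
        _ ≤ _ := by
          have : 0 ≤ lam ^ (K + 1 + 1) * (M * fkw ρ (K + m + 2)) := by positivity
          apply mul_le_mul_of_nonneg_right _ this
          linarith

end FuchsThm

section FuchsMain

variable {E : Type*} [NormedAddCommGroup E] [NormedSpace ℝ E] {n : ℕ}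

theorem fkT_sub {f g : ℝ × E → ℝ} {x : E} (hf : AnalyticAt ℝ f (0, x))
    (hg : AnalyticAt ℝ g (0, x)) (k : ℕ) :
    fkT k (fun y => f y - g y) x = fkT k f x - fkT k g x := by
  have h := fkT_add (hf.fun_sub hg) hg k
  simp only [sub_add_cancel] at h
  rw [eq_sub_iff_add_eq, ← h]

theorem fkT_d {e : Fin n → E} {W : ℝ × E → ℝ} {x : E} {G : ℕ → E → ℝ}
    (hW : AnalyticAt ℝ W (0, x)) (h : ∀ k, fkT k W =ᶠ[𝓝 x] G k) (μ : Fin (n + 1)) (k : ℕ) :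
    fkT k (fkD (fkv e μ) W) =ᶠ[𝓝 x] fkd e μ G k := by
  refine Fin.cases ?_ (fun i => ?_) μ
  · exact h (k + 1)
  · have hev : ∀ᶠ y in 𝓝 x, AnalyticAt ℝ W (0, y) := by
      have hc : ContinuousAt (fun y : E => ((0 : ℝ), y)) x := by fun_prop
      exact hc.eventually hW.eventually_analyticAt
    filter_upwards [hev, fkD_congr (v := e i) (h k)] with y h1 h2
    show fkT k (fkD (0, e i) W) y = fkD (e i) (G k) y
    rw [fkT_dx h1, h2]

theorem fkT_C {f g : ℝ × E → ℝ} {x : E} {A B : ℕ → E → ℝ} (hf : AnalyticAt ℝ f (0, x))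
    (hg : AnalyticAt ℝ g (0, x)) (hA : ∀ k, fkT k f x = A k x) (hB : ∀ k, fkT k g x = B k x)
    (k : ℕ) : fkT k (fun y => f y * g y) x = fkC A B k x := by
  rw [fkT_mul hf hg]
  refine Finset.sum_congr rfl fun ij _ => ?_
  rw [hA, hB]

theorem fkHF_analyticAt {e : Fin n → E} {A : Fin n → Fin (n + 1) → ℝ × E → ℝ}
    {c : Fin (n + 1) → Fin (n + 1) → ℝ × E → ℝ} {γ : Fin (n + 1) → ℝ × E → ℝ} {z : ℝ × E}
    (hA : ∀ i μ, AnalyticAt ℝ (A i μ) z) (hc : ∀ μ ν, AnalyticAt ℝ (c μ ν) z)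
    (hγ : ∀ μ, AnalyticAt ℝ (γ μ) z) {W : ℝ × E → ℝ} (hW : AnalyticAt ℝ W z) :
    AnalyticAt ℝ (fkHF e A c γ W) z := by
  unfold fkHF
  refine (AnalyticAt.fun_add ?_ ?_).fun_add ?_
  · exact Finset.analyticAt_fun_sum _ fun i _ => Finset.analyticAt_fun_sum _ fun μ _ =>
      (hA i μ).fun_mul (fkD_analyticAt (fkD_analyticAt hW))
  · exact Finset.analyticAt_fun_sum _ fun μ _ => Finset.analyticAt_fun_sum _ fun ν _ =>
      (hc μ ν).fun_mul ((fkD_analyticAt hW).fun_mul (fkD_analyticAt hW))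
  · exact Finset.analyticAt_fun_sum _ fun μ _ => (hγ μ).fun_mul (fkD_analyticAt hW)

theorem fkQF_analyticAt {e : Fin n → E} {δ : Fin n → ℝ × E → ℝ} {g : ℝ × E → ℝ} {z : ℝ × E}
    (hδ : ∀ i, AnalyticAt ℝ (δ i) z) (hg : AnalyticAt ℝ g z) {W : ℝ × E → ℝ}
    (hW : AnalyticAt ℝ W z) : AnalyticAt ℝ (fkQF e δ g W) z := by
  unfold fkQF
  exact (Finset.analyticAt_fun_sum _ fun i _ => (hδ i).fun_mul (fkD_analyticAt hW)).fun_add hg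

theorem fkT_HF {e : Fin n → E} {A : Fin n → Fin (n + 1) → ℝ × E → ℝ}
    {c : Fin (n + 1) → Fin (n + 1) → ℝ × E → ℝ} {γ : Fin (n + 1) → ℝ × E → ℝ} {x : E}
    (hA : ∀ i μ, AnalyticAt ℝ (A i μ) (0, x)) (hc : ∀ μ ν, AnalyticAt ℝ (c μ ν) (0, x))
    (hγ : ∀ μ, AnalyticAt ℝ (γ μ) (0, x)) {W : ℝ × E → ℝ} (hW : AnalyticAt ℝ W (0, x))
    {G : ℕ → E → ℝ} (h : ∀ k, fkT k W =ᶠ[𝓝 x] G k) (k : ℕ) :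
    fkT k (fkHF e A c γ W) x = fkHs e A c γ G k x := by
  have hd := fun μ => fkT_d (e := e) hW h μ
  have hD : ∀ μ, AnalyticAt ℝ (fkD (fkv e μ) W) (0, x) := fun μ => fkD_analyticAt hW
  have hd0 : ∀ μ k, fkT k (fkD (fkv e μ) W) x = fkd e μ G k x :=
    fun μ k => (hd μ k).self_of_nhds
  have hDD : ∀ i μ, AnalyticAt ℝ (fkD (0, e i) (fkD (fkv e μ) W)) (0, x) :=
    fun i μ => fkD_analyticAt (hD μ)
  have a1 : ∀ i μ, AnalyticAt ℝ
      (fun z => A i μ z * fkD (0, e i) (fkD (fkv e μ) W) z) (0, x) := fun i μ =>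
    (hA i μ).fun_mul (hDD i μ)
  have a2 : ∀ μ ν, AnalyticAt ℝ
      (fun z => c μ ν z * (fkD (fkv e μ) W z * fkD (fkv e ν) W z)) (0, x) := fun μ ν =>
    (hc μ ν).fun_mul ((hD μ).fun_mul (hD ν))
  have a3 : ∀ μ, AnalyticAt ℝ (fun z => γ μ z * fkD (fkv e μ) W z) (0, x) := fun μ =>
    (hγ μ).fun_mul (hD μ)
  have b1 : ∀ i, AnalyticAt ℝ
      (fun z => ∑ μ, A i μ z * fkD (0, e i) (fkD (fkv e μ) W) z) (0, x) := fun i =>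
    Finset.analyticAt_fun_sum _ fun μ _ => a1 i μ
  have b2 : ∀ μ, AnalyticAt ℝ
      (fun z => ∑ ν, c μ ν z * (fkD (fkv e μ) W z * fkD (fkv e ν) W z)) (0, x) := fun μ =>
    Finset.analyticAt_fun_sum _ fun ν _ => a2 μ ν
  have c1 := Finset.analyticAt_fun_sum Finset.univ fun i _ => b1 i
  have c2 := Finset.analyticAt_fun_sum Finset.univ fun μ _ => b2 μ
  have c3 := Finset.analyticAt_fun_sum Finset.univ fun μ _ => a3 μ
  unfold fkHF fkHs
  rw [fkT_add (c1.fun_add c2) c3, fkT_add c1 c2, fkT_sum _ (fun i _ => b1 i),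
    fkT_sum _ (fun i _ => b2 i), fkT_sum _ (fun i _ => a3 i)]
  congr 1
  · congr 1
    · refine Finset.sum_congr rfl fun i _ => ?_
      rw [fkT_sum _ (fun μ _ => a1 i μ)]
      refine Finset.sum_congr rfl fun μ _ => ?_
      refine fkT_C (hA i μ) (hDD i μ) (fun _ => rfl) (fun k => ?_) k
      rw [fkT_dx (hD μ)]
      exact (fkD_congr (hd μ k)).self_of_nhds
    · refine Finset.sum_congr rfl fun μ _ => ?_
      rw [fkT_sum _ (fun ν _ => a2 μ ν)]
      refine Finset.sum_congr rfl fun ν _ => ?_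
      refine fkT_C (hc μ ν) ((hD μ).fun_mul (hD ν)) (fun _ => rfl) (fun k => ?_) k
      exact fkT_C (hD μ) (hD ν) (hd0 μ) (hd0 ν) k
  · refine Finset.sum_congr rfl fun μ _ => ?_
    exact fkT_C (hγ μ) (hD μ) (fun _ => rfl) (hd0 μ) k

theorem fkT_QF {e : Fin n → E} {δ : Fin n → ℝ × E → ℝ} {g : ℝ × E → ℝ} {x : E}
    (hδ : ∀ i, AnalyticAt ℝ (δ i) (0, x)) (hg : AnalyticAt ℝ g (0, x)) {W : ℝ × E → ℝ}
    (hW : AnalyticAt ℝ W (0, x))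
    {G : ℕ → E → ℝ} (h : ∀ k, fkT k W =ᶠ[𝓝 x] G k) (k : ℕ) :
    fkT k (fkQF e δ g W) x = fkQs e δ g G k x := by
  have a1 : ∀ i, AnalyticAt ℝ (fun z => δ i z * fkD (0, e i) W z) (0, x) := fun i =>
    (hδ i).fun_mul (fkD_analyticAt hW)
  unfold fkQF fkQs
  rw [fkT_add (Finset.analyticAt_fun_sum _ fun i _ => a1 i) hg, fkT_sum _ (fun i _ => a1 i)]
  congr 1
  refine Finset.sum_congr rfl fun i _ => ?_
  refine fkT_C (hδ i) (fkD_analyticAt hW) (fun _ => rfl) (fun k => ?_) k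
  rw [fkT_dx hW]
  exact (fkD_congr (h k)).self_of_nhds

/-- analytic functions with prescribed Taylor coefficients -/
theorem fk_realize {G : ℕ → E → ℝ} {x₀ : E} {V : Set E} (hV : V ∈ 𝓝 x₀)
    (hG : ∀ k, ∀ x ∈ V, AnalyticAt ℝ (G k) x) {M L : ℝ} (hM : 0 ≤ M) (hL : 1 ≤ L)
    (hb : ∀ k m, ‖iteratedFDeriv ℝ m (G k) x₀‖ ≤ M * (k + m)! * L ^ (k + m)) :
    AnalyticAt ℝ (fun z : ℝ × E => ∑' k, ((k ! : ℝ)⁻¹ * G k z.2) * z.1 ^ k) (0, x₀) ∧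
    ∀ᶠ x in 𝓝 x₀, ∀ k, fkT k (fun z : ℝ × E => ∑' k, ((k ! : ℝ)⁻¹ * G k z.2) * z.1 ^ k) x =
      G k x := by
  have hgan : ∀ k, ∀ x ∈ V, AnalyticAt ℝ (fun y => (k ! : ℝ)⁻¹ * G k y) x := fun k x hx =>
    analyticAt_const.fun_mul (hG k x hx)
  obtain ⟨h1, M', L', hL', h2⟩ := fk_joint (g := fun k y => (k ! : ℝ)⁻¹ * G k y) hV hgan hM
    (L := 2 * L) (by linarith) (by
      intro k m
      rw [fk_norm_const_mul (hG k x₀ (mem_of_mem_nhds hV)), abs_of_pos (by positivity),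
        inv_mul_le_iff₀ (by positivity)]
      refine (hb k m).trans ?_
      have h3 := Nat.add_choose_mul_factorial_mul_factorial k m
      have h4 : ((k + m)! : ℝ) ≤ 2 ^ (k + m) * k ! * m ! := by
        rw [← h3]
        push_cast
        gcongr
        exact_mod_cast Nat.choose_le_two_pow _ _
      calc M * (k + m)! * L ^ (k + m) ≤ M * (2 ^ (k + m) * k ! * m !) * L ^ (k + m) := by gcongr
        _ = _ := by rw [mul_pow]; ring)
  refine ⟨h1, ?_⟩
  have hev : ∀ᶠ y in 𝓝 x₀, AnalyticAt ℝ
      (fun z : ℝ × E => ∑' k, ((k ! : ℝ)⁻¹ * G k z.2) * z.1 ^ k) (0, y) := by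
    have hc : ContinuousAt (fun y : E => ((0 : ℝ), y)) x₀ := by fun_prop
    exact hc.eventually h1.eventually_analyticAt
  filter_upwards [h2, hev] with x hx hx2 k
  have h5 := fk_series_iteratedDeriv hL' hx k
  have h6 := fk_slice k hx2
  simp only [fkT]
  rw [← h6]
  simp only
  rw [h5]
  field_simp

/-- the Fuchsian Cauchy problem -/
theorem fk_main {e : Fin n → E} (he : ∀ i, ‖e i‖ ≤ 1) {V : Set E} (hV : IsOpen V)
    {A : Fin n → Fin (n + 1) → ℝ × E → ℝ}
    {c : Fin (n + 1) → Fin (n + 1) → ℝ × E → ℝ} {γ : Fin (n + 1) → ℝ × E → ℝ}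
    {δ : Fin n → ℝ × E → ℝ} {g : ℝ × E → ℝ}
    (hA : ∀ i μ, ∀ x ∈ V, AnalyticAt ℝ (A i μ) (0, x))
    (hc : ∀ μ ν, ∀ x ∈ V, AnalyticAt ℝ (c μ ν) (0, x))
    (hγ : ∀ μ, ∀ x ∈ V, AnalyticAt ℝ (γ μ) (0, x))
    (hδ : ∀ i, ∀ x ∈ V, AnalyticAt ℝ (δ i) (0, x))
    (hg : ∀ x ∈ V, AnalyticAt ℝ g (0, x)) :
    ∃ W : ℝ × E → ℝ, ∀ x ∈ V, AnalyticAt ℝ W (0, x) ∧ ∀ᶠ z in 𝓝 ((0 : ℝ), x),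
      z.1 * fkD (1, 0) (fkD (1, 0) W) z + (fkD (1, 0) W z + fkD (1, 0) W z) =
        z.1 * fkHF e A c γ W z + fkQF e δ g W z := by
  obtain ⟨G, hG0, hG⟩ := fk_exists_seq e A c γ δ g
  have hbd : ∀ x ∈ V, ∃ lam ρ M : ℝ, 1 ≤ lam ∧ 1 ≤ ρ ∧ 0 ≤ M ∧ ∀ K, fkB K x lam ρ M 0 G :=
    fun x hx => fk_seq_bound he (fun i μ => hA i μ x hx) (fun μ ν => hc μ ν x hx)
      (fun μ => hγ μ x hx) (fun i => hδ i x hx) (hg x hx) hG0 hG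
  have hGan : ∀ k, ∀ x ∈ V, AnalyticAt ℝ (G k) x := by
    intro k x hx
    obtain ⟨_, _, _, _, _, _, h⟩ := hbd x hx
    exact (h k k le_rfl).1
  set W : ℝ × E → ℝ := fun z => ∑' k, ((k ! : ℝ)⁻¹ * G k z.2) * z.1 ^ k with hW
  have hreal : ∀ x ∈ V, AnalyticAt ℝ W (0, x) ∧
      ∀ᶠ y in 𝓝 x, ∀ k, fkT k W y = G k y := fun x hx => by
    obtain ⟨lam, ρ, M, hl, hρ, hM, h⟩ := hbd x hx
    exact fk_realize (hV.mem_nhds hx) hGan hM (L := lam * ρ) (by nlinarith) (by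
      intro k m
      refine ((h k k le_rfl).2 m).trans ?_
      unfold fkw
      rw [add_zero]
      have h1 : ((k + m)! : ℝ) * ρ ^ (k + m) / (((k + m : ℕ) : ℝ) + 1) ^ 2 ≤
          (k + m)! * ρ ^ (k + m) := by
        apply div_le_self (by positivity)
        have : (0:ℝ) ≤ ((k + m : ℕ) : ℝ) := Nat.cast_nonneg _
        nlinarith
      have h2 : lam ^ k ≤ lam ^ (k + m) := pow_le_pow_right₀ hl (by omega)
      calc _ ≤ lam ^ (k + m) * (M * ((k + m)! * ρ ^ (k + m))) := by gcongr
        _ = _ := by rw [mul_pow]; ring)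
  refine ⟨W, fun x hx => ⟨(hreal x hx).1, ?_⟩⟩
  have hR : ∀ y ∈ V, AnalyticAt ℝ (fun z : ℝ × E =>
      z.1 * fkD (1, 0) (fkD (1, 0) W) z + (fkD (1, 0) W z + fkD (1, 0) W z)) (0, y) ∧
      AnalyticAt ℝ (fun z : ℝ × E => z.1 * fkHF e A c γ W z + fkQF e δ g W z) (0, y) := by
    intro y hy
    have hWy := (hreal y hy).1
    exact ⟨(analyticAt_fst.fun_mul (fkD_analyticAt (fkD_analyticAt hWy))).fun_add
      ((fkD_analyticAt hWy).fun_add (fkD_analyticAt hWy)),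
      (analyticAt_fst.fun_mul (fkHF_analyticAt (fun i μ => hA i μ y hy) (fun μ ν => hc μ ν y hy)
      (fun μ => hγ μ y hy) hWy)).fun_add (fkQF_analyticAt (fun i => hδ i y hy) (hg y hy) hWy)⟩
  have hz := fkT_identity ((hR x hx).1.fun_sub (hR x hx).2) (by
    filter_upwards [hV.mem_nhds hx] with y hy k
    obtain ⟨r1, r2⟩ := hR y hy
    obtain ⟨hWy, hTy⟩ := hreal y hy
    have hT : ∀ k, fkT k W =ᶠ[𝓝 y] G k := fun k => hTy.mono fun z hz => hz k
    have hT0 : ∀ k, fkT k W y = G k y := fun k => (hT k).self_of_nhds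
    have hH := fkHF_analyticAt (e := e) (fun i μ => hA i μ y hy) (fun μ ν => hc μ ν y hy)
      (fun μ => hγ μ y hy) hWy
    have hQ := fkQF_analyticAt (e := e) (fun i => hδ i y hy) (hg y hy) hWy
    have hs1 : AnalyticAt ℝ (fkD ((1, 0) : ℝ × E) W) (0, y) := fkD_analyticAt hWy
    have hs2 : AnalyticAt ℝ (fkD ((1, 0) : ℝ × E) (fkD (1, 0) W)) (0, y) := fkD_analyticAt hs1
    rw [fkT_sub r1 r2, fkT_add (analyticAt_fst.fun_mul hs2) (hs1.fun_add hs1),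
      fkT_add hs1 hs1, fkT_add (analyticAt_fst.fun_mul hH) hQ, fkT_smul k hs2, fkT_smul k hH,
      fkT_HF (fun i μ => hA i μ y hy) (fun μ ν => hc μ ν y hy) (fun μ => hγ μ y hy) hWy hT,
      fkT_QF (fun i => hδ i y hy) (hg y hy) hWy hT]
    simp only [fkT_ds, hT0]
    have hGk := congrFun (hG k) y
    have hk2 : ((k : ℝ) + 2) ≠ 0 := by positivity
    have hGk2 : ((k : ℝ) + 2) * G (k + 1) y =
        (k : ℝ) * fkHs e A c γ G (k - 1) y + fkQs e δ g G k y := by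
      rw [hGk]; field_simp
    rcases k with _ | k
    · simp only [Nat.cast_zero, zero_mul, zero_add] at hGk2 ⊢
      linarith
    · rw [Nat.add_sub_cancel] at hGk2 ⊢
      linarith)
  filter_upwards [hz] with z hz
  exact sub_eq_zero.1 hz

end FuchsMain

section FuchsChain

variable {E : Type*} [NormedAddCommGroup E] [NormedSpace ℝ E]

theorem fk_div {V : Set E} (hV : IsOpen V) {F : ℝ × E → ℝ}
    (hF : ∀ x ∈ V, AnalyticAt ℝ F (0, x)) (hF0 : ∀ x ∈ V, F (0, x) = 0) :
    ∃ h : ℝ × E → ℝ, ∀ x ∈ V, AnalyticAt ℝ h (0, x) ∧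
      ∀ᶠ z in 𝓝 ((0 : ℝ), x), F z = z.1 * h z := by
  set G : ℕ → E → ℝ := fun k x => ((k : ℝ) + 1)⁻¹ * fkT (k + 1) F x with hG
  have hGan : ∀ k, ∀ x ∈ V, AnalyticAt ℝ (G k) x := fun k x hx =>
    analyticAt_const.fun_mul (fkT_analyticAt (hF x hx) (k + 1))
  set H : ℝ × E → ℝ := fun z => ∑' k, ((k ! : ℝ)⁻¹ * G k z.2) * z.1 ^ k with hH
  have hreal : ∀ x ∈ V, AnalyticAt ℝ H (0, x) ∧
      ∀ᶠ y in 𝓝 x, ∀ k, fkT k H y = G k y := fun x hx => by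
    obtain ⟨C, L, hC, hL, hb⟩ := fkT_cauchy (hF x hx)
    refine fk_realize (hV.mem_nhds hx) hGan (M := C * L) (L := 2 * L) (by positivity)
      (by linarith) ?_
    intro k m
    rw [hG, fk_norm_const_mul (fkT_analyticAt (hF x hx) (k + 1)), abs_of_pos (by positivity)]
    have h1 := hb (k + 1) m
    have h2 : ((k : ℝ) + 1)⁻¹ ≤ 1 := by
      apply inv_le_one_of_one_le₀
      have : (0:ℝ) ≤ k := Nat.cast_nonneg k
      linarith
    have h3 : ((k : ℝ) + m + 1) ≤ 2 ^ (k + m) := by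
      have h : (k + m) + 1 ≤ 2 ^ (k + m) := Nat.lt_two_pow_self
      exact_mod_cast h
    calc _ ≤ 1 * (C * (k + 1 + m)! * L ^ (k + 1 + m)) :=
          mul_le_mul h2 h1 (norm_nonneg _) zero_le_one
      _ = C * L * (((k : ℝ) + m + 1) * (k + m)!) * L ^ (k + m) := by
          rw [show k + 1 + m = k + m + 1 by ring, Nat.factorial_succ, pow_succ]
          push_cast; ring
      _ ≤ C * L * (2 ^ (k + m) * (k + m)!) * L ^ (k + m) := by gcongr
      _ = _ := by rw [mul_pow]; ring
  refine ⟨H, fun x hx => ⟨(hreal x hx).1, ?_⟩⟩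
  have han : ∀ y ∈ V, AnalyticAt ℝ (fun z : ℝ × E => z.1 * H z) (0, y) := fun y hy =>
    analyticAt_fst.fun_mul (hreal y hy).1
  have hz := fkT_identity ((hF x hx).fun_sub (han x hx)) (by
    filter_upwards [hV.mem_nhds hx] with y hy k
    rw [fkT_sub (hF y hy) (han y hy), fkT_smul k (hreal y hy).1]
    rcases k with _ | k
    · simp only [Nat.cast_zero, zero_mul, sub_zero]
      exact hF0 y hy
    · rw [Nat.add_sub_cancel, (hreal y hy).2.self_of_nhds k, hG]
      push_cast
      have : ((k : ℝ) + 1) ≠ 0 := by positivity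
      field_simp
      ring)
  filter_upwards [hz] with z hz
  exact sub_eq_zero.1 hz

/-- the coordinate change flattening the hypersurface -/
def fkTh (ψ : E → ℝ) (p : ℝ × E) : ℝ × E := (p.1 - ψ p.2, p.2)

theorem fkTh_analyticAt {ψ : E → ℝ} {p : ℝ × E} (hψ : AnalyticAt ℝ ψ p.2) :
    AnalyticAt ℝ (fkTh ψ) p :=
  (analyticAt_fst.fun_sub (AnalyticAt.comp (f := Prod.snd) hψ analyticAt_snd)).prod analyticAt_snd

theorem fk_chain {ψ : E → ℝ} {f : ℝ × E → ℝ} {p : ℝ × E} (hψ : AnalyticAt ℝ ψ p.2)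
    (hf : AnalyticAt ℝ f (fkTh ψ p)) (v : ℝ × E) :
    fkD v (fun q => f (fkTh ψ q)) p = fkD (0, v.2) f (fkTh ψ p) +
      (v.1 - fkD v.2 ψ p.2) * fkD (1, 0) f (fkTh ψ p) := by
  have h1 : HasFDerivAt (fkTh ψ) ((ContinuousLinearMap.fst ℝ ℝ E -
      (fderiv ℝ ψ p.2).comp (ContinuousLinearMap.snd ℝ ℝ E)).prod
      (ContinuousLinearMap.snd ℝ ℝ E)) p := by
    refine HasFDerivAt.prodMk (HasFDerivAt.sub hasFDerivAt_fst ?_) hasFDerivAt_snd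
    exact HasFDerivAt.comp p hψ.differentiableAt.hasFDerivAt hasFDerivAt_snd
  have h2 := HasFDerivAt.comp p hf.differentiableAt.hasFDerivAt h1
  have h3 : fderiv ℝ (fun q => f (fkTh ψ q)) p = _ := h2.fderiv
  simp only [fkD]
  rw [h3]
  simp only [ContinuousLinearMap.comp_apply, ContinuousLinearMap.prod_apply,
    sub_apply, ContinuousLinearMap.coe_fst', ContinuousLinearMap.coe_snd']
  rw [← smul_eq_mul (v.1 - _), ← map_smul, ← map_add]
  congr 1
  ext <;> simp

theorem fk_chain_s {ψ : E → ℝ} {f : ℝ × E → ℝ} {p : ℝ × E} (hψ : AnalyticAt ℝ ψ p.2)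
    (hf : AnalyticAt ℝ f (fkTh ψ p)) :
    fkD (1, 0) (fun q => f (fkTh ψ q)) p = fkD (1, 0) f (fkTh ψ p) := by
  rw [fk_chain hψ hf]
  have h0 : fkD ((0 : ℝ), (0 : E)) f (fkTh ψ p) = 0 := map_zero (fderiv ℝ f (fkTh ψ p))
  have h1 : fkD (0 : E) ψ p.2 = 0 := map_zero (fderiv ℝ ψ p.2)
  simp only [h0, h1]; ring

theorem fk_chain_x {ψ : E → ℝ} {f : ℝ × E → ℝ} {p : ℝ × E} (hψ : AnalyticAt ℝ ψ p.2)
    (hf : AnalyticAt ℝ f (fkTh ψ p)) (e : E) :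
    fkD (0, e) (fun q => f (fkTh ψ q)) p = fkD (0, e) f (fkTh ψ p) -
      fkD e ψ p.2 * fkD (1, 0) f (fkTh ψ p) := by
  rw [fk_chain hψ hf]
  simp only; ring

theorem fk_chain_ev {ψ : E → ℝ} {f : ℝ × E → ℝ} {p : ℝ × E} (hψ : AnalyticAt ℝ ψ p.2)
    (hf : AnalyticAt ℝ f (fkTh ψ p)) :
    ∀ᶠ q in 𝓝 p, AnalyticAt ℝ ψ q.2 ∧ AnalyticAt ℝ f (fkTh ψ q) := by
  have h1 := (continuous_snd.continuousAt (x := p)).eventually hψ.eventually_analyticAt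
  have h2 := (fkTh_analyticAt hψ).continuousAt.eventually hf.eventually_analyticAt
  exact h1.and h2

theorem fk_chain_ss {ψ : E → ℝ} {f : ℝ × E → ℝ} {p : ℝ × E} (hψ : AnalyticAt ℝ ψ p.2)
    (hf : AnalyticAt ℝ f (fkTh ψ p)) :
    fkD (1, 0) (fkD (1, 0) (fun q => f (fkTh ψ q))) p =
      fkD (1, 0) (fkD (1, 0) f) (fkTh ψ p) := by
  have h : fkD (1, 0) (fun q => f (fkTh ψ q)) =ᶠ[𝓝 p] fun q => fkD (1, 0) f (fkTh ψ q) :=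
    (fk_chain_ev hψ hf).mono fun q hq => fk_chain_s hq.1 hq.2
  rw [(fkD_congr h).self_of_nhds, fk_chain_s hψ (fkD_analyticAt hf)]

theorem fkD_sub' {v : E} {f g : E → ℝ} {z : E} (hf : AnalyticAt ℝ f z) (hg : AnalyticAt ℝ g z) :
    fkD v (fun y => f y - g y) z = fkD v f z - fkD v g z := by
  simp only [fkD]
  rw [fderiv_fun_sub hf.differentiableAt hg.differentiableAt]; rfl

theorem fkD_snd {ψ : E → ℝ} {p : ℝ × E} (hψ : AnalyticAt ℝ ψ p.2) (e : E) :
    fkD (0, e) (fun q : ℝ × E => ψ q.2) p = fkD e ψ p.2 := by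
  have h2 := HasFDerivAt.comp p hψ.differentiableAt.hasFDerivAt hasFDerivAt_snd
  have h3 : fderiv ℝ (fun q : ℝ × E => ψ q.2) p = _ := h2.fderiv
  simp only [fkD]
  rw [h3]
  simp

theorem fk_chain_xx {ψ : E → ℝ} {f : ℝ × E → ℝ} {p : ℝ × E} (hψ : AnalyticAt ℝ ψ p.2)
    (hf : AnalyticAt ℝ f (fkTh ψ p)) (e : E) :
    fkD (0, e) (fkD (0, e) (fun q => f (fkTh ψ q))) p =
      fkD (0, e) (fkD (0, e) f) (fkTh ψ p) -
      2 * fkD e ψ p.2 * fkD (0, e) (fkD (1, 0) f) (fkTh ψ p) -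
      fkD e (fkD e ψ) p.2 * fkD (1, 0) f (fkTh ψ p) +
      fkD e ψ p.2 ^ 2 * fkD (1, 0) (fkD (1, 0) f) (fkTh ψ p) := by
  have h : fkD (0, e) (fun q => f (fkTh ψ q)) =ᶠ[𝓝 p] fun q => fkD (0, e) f (fkTh ψ q) -
      fkD e ψ q.2 * fkD (1, 0) f (fkTh ψ q) :=
    (fk_chain_ev hψ hf).mono fun q hq => fk_chain_x hq.1 hq.2 e
  have hfe : AnalyticAt ℝ (fkD ((0, e) : ℝ × E) f) (fkTh ψ p) := fkD_analyticAt hf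
  have hfs : AnalyticAt ℝ (fkD ((1, 0) : ℝ × E) f) (fkTh ψ p) := fkD_analyticAt hf
  have hpe : AnalyticAt ℝ (fkD e ψ) p.2 := fkD_analyticAt hψ
  have hTh := fkTh_analyticAt hψ
  have hpe' : AnalyticAt ℝ (fun q : ℝ × E => fkD e ψ q.2) p :=
    AnalyticAt.comp (f := Prod.snd) hpe analyticAt_snd
  have hfe' : AnalyticAt ℝ (fun q : ℝ × E => fkD (0, e) f (fkTh ψ q)) p := hfe.comp hTh
  have hfs' : AnalyticAt ℝ (fun q : ℝ × E => fkD (1, 0) f (fkTh ψ q)) p := hfs.comp hTh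
  rw [(fkD_congr h).self_of_nhds, fkD_sub' hfe' (hpe'.fun_mul hfs'),
    (fkD_mul hpe' hfs').self_of_nhds]
  beta_reduce
  rw [fkD_snd hpe, fk_chain_x hψ hfe, fk_chain_x hψ hfs,
    (fkD_comm (v := ((1, 0) : ℝ × E)) (w := (0, e)) hf).self_of_nhds]
  ring

/-- the singular ansatz in flattened coordinates -/
noncomputable def fkU (a : ℝ) (W : ℝ × E → ℝ) : ℝ × E → ℝ := fun z => -a * Real.log z.1 + W z

theorem fk_log_analyticAt {s : ℝ} (hs : s ≠ 0) : AnalyticAt ℝ Real.log s := by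
  rcases lt_or_gt_of_ne hs with h | h
  · have h1 : AnalyticAt ℝ Real.log (-s) := AnalyticAt.log analyticAt_id (by simpa using h)
    have h2 : AnalyticAt ℝ (fun y : ℝ => Real.log (-y)) s :=
      AnalyticAt.comp (f := fun y : ℝ => -y) h1 analyticAt_id.neg
    simpa only [Real.log_neg_eq_log] using h2
  · exact AnalyticAt.log analyticAt_id h

theorem fkU_analyticAt {a : ℝ} {W : ℝ × E → ℝ} {z : ℝ × E} (hz : z.1 ≠ 0)
    (hW : AnalyticAt ℝ W z) : AnalyticAt ℝ (fkU a W) z :=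
  (analyticAt_const.fun_mul (AnalyticAt.comp (f := Prod.fst) (fk_log_analyticAt hz)
    analyticAt_fst)).fun_add hW

theorem fkD_fst {h : ℝ → ℝ} {h' : ℝ} {z : ℝ × E} (hh : HasDerivAt h h' z.1) (v : ℝ × E) :
    fkD v (fun q : ℝ × E => h q.1) z = v.1 * h' := by
  have h2 := HasFDerivAt.comp z hh.hasFDerivAt hasFDerivAt_fst
  have h3 : fderiv ℝ (fun q : ℝ × E => h q.1) z = _ := h2.fderiv
  simp only [fkD]
  rw [h3]
  simp

theorem fkU_D {a : ℝ} {W : ℝ × E → ℝ} {z : ℝ × E} (hz : z.1 ≠ 0)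
    (hW : AnalyticAt ℝ W z) (v : ℝ × E) :
    fkD v (fkU a W) z = v.1 * (-a * z.1⁻¹) + fkD v W z := by
  have h1 : AnalyticAt ℝ (fun q : ℝ × E => -a * Real.log q.1) z :=
    analyticAt_const.fun_mul (AnalyticAt.comp (f := Prod.fst) (fk_log_analyticAt hz)
    analyticAt_fst)
  unfold fkU
  rw [(fkD_add h1 hW).self_of_nhds]
  beta_reduce
  rw [fkD_fst (h := fun s => -a * Real.log s)
    ((Real.hasDerivAt_log hz).const_mul (-a))]

theorem fkU_DD {a : ℝ} {W : ℝ × E → ℝ} {z : ℝ × E} (hz : z.1 ≠ 0)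
    (hW : AnalyticAt ℝ W z) (v w : ℝ × E) :
    fkD v (fkD w (fkU a W)) z = v.1 * w.1 * (a * (z.1 ^ 2)⁻¹) + fkD v (fkD w W) z := by
  have hev : fkD w (fkU a W) =ᶠ[𝓝 z] fun q => w.1 * (-a * q.1⁻¹) + fkD w W q := by
    have h0 : ∀ᶠ q : ℝ × E in 𝓝 z, q.1 ≠ 0 :=
      (continuous_fst.continuousAt (x := z)).eventually_ne hz
    filter_upwards [h0, hW.eventually_analyticAt] with q h1 h2
    exact fkU_D h1 h2 w
  have h1 : AnalyticAt ℝ (fun q : ℝ × E => w.1 * (-a * q.1⁻¹)) z :=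
    analyticAt_const.fun_mul (analyticAt_const.fun_mul (analyticAt_fst.fun_inv hz))
  rw [(fkD_congr hev).self_of_nhds, (fkD_add h1 (fkD_analyticAt hW)).self_of_nhds]
  beta_reduce
  rw [fkD_fst (h := fun s => w.1 * (-a * s⁻¹))
    (((hasDerivAt_inv hz).const_mul (-a)).const_mul w.1)]
  ring

end FuchsChain

section FuchsPartial

variable {n : ℕ}

/-- coordinate vectors -/
noncomputable def fke (i : Fin n) : Fin n → ℝ := Pi.single i 1

theorem fke_norm (i : Fin n) : ‖fke i‖ ≤ 1 := by
  unfold fke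
  rw [Pi.norm_single]; simp

theorem fk_update (x : Fin n → ℝ) (i : Fin n) :
    HasDerivAt (fun y => Function.update x i y) (fke i) (x i) :=
  hasDerivAt_update x i (x i)

theorem fk_gradp {ψ : (Fin n → ℝ) → ℝ} {x : Fin n → ℝ} (h : AnalyticAt ℝ ψ x) (i : Fin n) :
    deriv (fun y => ψ (Function.update x i y)) (x i) = fkD (fke i) ψ x := by
  have h1 : HasFDerivAt ψ (fderiv ℝ ψ x) (Function.update x i (x i)) := by
    rw [Function.update_eq_self]; exact h.differentiableAt.hasFDerivAt
  exact (h1.comp_hasDerivAt (x i) (fk_update x i)).deriv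

theorem fk_partial_t {u : ℝ → (Fin n → ℝ) → ℝ} {t : ℝ} {x : Fin n → ℝ}
    (h : AnalyticAt ℝ (fun p : ℝ × (Fin n → ℝ) => u p.1 p.2) (t, x)) :
    deriv (fun s => u s x) t = fkD (1, 0) (fun p : ℝ × (Fin n → ℝ) => u p.1 p.2) (t, x) := by
  have h2 : HasDerivAt (fun s : ℝ => (s, x)) (1, 0) t :=
    (hasDerivAt_id t).prodMk (hasDerivAt_const t x)
  exact (h.differentiableAt.hasFDerivAt.comp_hasDerivAt t h2).deriv

theorem fk_partial_x {u : ℝ → (Fin n → ℝ) → ℝ} {t : ℝ} {x : Fin n → ℝ}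
    (h : AnalyticAt ℝ (fun p : ℝ × (Fin n → ℝ) => u p.1 p.2) (t, x)) (i : Fin n) :
    deriv (fun y => u t (Function.update x i y)) (x i) =
      fkD (0, fke i) (fun p : ℝ × (Fin n → ℝ) => u p.1 p.2) (t, x) := by
  have h2 : HasDerivAt (fun y : ℝ => (t, Function.update x i y)) (0, fke i) (x i) :=
    (hasDerivAt_const (x i) t).prodMk (fk_update x i)
  have h1 : HasFDerivAt (fun p : ℝ × (Fin n → ℝ) => u p.1 p.2)
      (fderiv ℝ (fun p : ℝ × (Fin n → ℝ) => u p.1 p.2) (t, x))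
      (t, Function.update x i (x i)) := by
    rw [Function.update_eq_self]; exact h.differentiableAt.hasFDerivAt
  exact (h1.comp_hasDerivAt (x i) h2).deriv

end FuchsPartial

section FuchsAlgebra

variable {n : ℕ}

/-- bilinear form -/
noncomputable def fkBil (C : Fin (n + 1) → Fin (n + 1) → ℝ) (x y : Fin (n + 1) → ℝ) : ℝ :=
  ∑ α, ∑ β, C α β * (x α * y β)

theorem fkBil_comb (C : Fin (n + 1) → Fin (n + 1) → ℝ) (x y : Fin (n + 1) → ℝ) (k l k' l' : ℝ) :
    fkBil C (fun α => k * x α + l * y α) (fun α => k' * x α + l' * y α) =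
      k * k' * fkBil C x x + k * l' * fkBil C x y + l * k' * fkBil C y x +
      l * l' * fkBil C y y := by
  simp only [fkBil, Finset.mul_sum, ← Finset.sum_add_distrib]
  refine Finset.sum_congr rfl fun α _ => Finset.sum_congr rfl fun β _ => ?_
  ring

/-- conormal vector -/
noncomputable def fkev (p : Fin n → ℝ) : Fin (n + 1) → ℝ := Fin.cons (-1) p

/-- change of frame -/
noncomputable def fkL (p : Fin n → ℝ) (α μ : Fin (n + 1)) : ℝ :=
  (if α = μ then 1 else 0) - (if μ = 0 then (Fin.cons 0 p : Fin (n + 1) → ℝ) α else 0)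

theorem fkL_sum (p : Fin n → ℝ) (w : Fin (n + 1) → ℝ) (α : Fin (n + 1)) :
    ∑ μ, fkL p α μ * w μ = w α - (Fin.cons 0 p : Fin (n + 1) → ℝ) α * w 0 := by
  simp [fkL, sub_mul, Finset.sum_sub_distrib, ite_mul]

noncomputable def fkcc (d : ℝ) (p : Fin n → ℝ) (C : Fin (n + 1) → Fin (n + 1) → ℝ)
    (μ ν : Fin (n + 1)) : ℝ :=
  d⁻¹ * ∑ α, ∑ β, C α β * (fkL p α μ * fkL p β ν)

noncomputable def fkAA (d : ℝ) (p : Fin n → ℝ) (i : Fin n) (μ : Fin (n + 1)) : ℝ :=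
  d⁻¹ * ((if μ = 0 then -2 * p i else 0) + (if μ = i.succ then 1 else 0))

noncomputable def fkgg (d : ℝ) (p : Fin n → ℝ) (C1 : Fin (n + 1) → ℝ) (l h : ℝ)
    (μ : Fin (n + 1)) : ℝ :=
  d⁻¹ * (∑ α, C1 α * fkL p α μ + (if μ = 0 then -l - 2 * h else 0))

noncomputable def fkdd (a d : ℝ) (p : Fin n → ℝ) (C : Fin (n + 1) → Fin (n + 1) → ℝ)
    (i : Fin n) : ℝ :=
  d⁻¹ * (a * (∑ α, C α i.succ * fkev p α + ∑ β, C i.succ β * fkev p β))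

noncomputable def fkg0 (a d s : ℝ) (p : Fin n → ℝ) (C1 : Fin (n + 1) → ℝ) (c0 l h : ℝ) : ℝ :=
  d⁻¹ * (s * c0 + a * ∑ α, C1 α * fkev p α + a * l + a * h)

theorem fkcc_sum (d : ℝ) (p : Fin n → ℝ) (C : Fin (n + 1) → Fin (n + 1) → ℝ)
    (w : Fin (n + 1) → ℝ) :
    ∑ μ, ∑ ν, fkcc d p C μ ν * (w μ * w ν) =
      d⁻¹ * fkBil C (fun α => ∑ μ, fkL p α μ * w μ) (fun α => ∑ μ, fkL p α μ * w μ) := by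
  have h1 : fkBil C (fun α => ∑ μ, fkL p α μ * w μ) (fun α => ∑ μ, fkL p α μ * w μ) =
      ∑ α, ∑ β, ∑ μ, ∑ ν, C α β * (fkL p α μ * fkL p β ν) * (w μ * w ν) := by
    unfold fkBil
    refine Finset.sum_congr rfl fun α _ => Finset.sum_congr rfl fun β _ => ?_
    rw [Finset.sum_mul_sum]
    simp only [Finset.mul_sum]
    refine Finset.sum_congr rfl fun μ _ => Finset.sum_congr rfl fun ν _ => ?_
    ring
  have h2 : ∑ μ, ∑ ν, fkcc d p C μ ν * (w μ * w ν) =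
      d⁻¹ * ∑ μ, ∑ ν, ∑ α, ∑ β, C α β * (fkL p α μ * fkL p β ν) * (w μ * w ν) := by
    simp only [fkcc, Finset.mul_sum, Finset.sum_mul]
    refine Finset.sum_congr rfl fun μ _ => Finset.sum_congr rfl fun ν _ =>
      Finset.sum_congr rfl fun α _ => Finset.sum_congr rfl fun β _ => ?_
    ring
  rw [h1, h2]
  congr 1
  calc _ = ∑ μ, ∑ α, ∑ ν, ∑ β, C α β * (fkL p α μ * fkL p β ν) * (w μ * w ν) :=
        Finset.sum_congr rfl fun μ _ => Finset.sum_comm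
    _ = ∑ α, ∑ μ, ∑ ν, ∑ β, C α β * (fkL p α μ * fkL p β ν) * (w μ * w ν) := Finset.sum_comm
    _ = ∑ α, ∑ μ, ∑ β, ∑ ν, C α β * (fkL p α μ * fkL p β ν) * (w μ * w ν) :=
        Finset.sum_congr rfl fun α _ => Finset.sum_congr rfl fun μ _ => Finset.sum_comm
    _ = _ := Finset.sum_congr rfl fun α _ => Finset.sum_comm

theorem fkdd_sum (a d : ℝ) (p : Fin n → ℝ) (C : Fin (n + 1) → Fin (n + 1) → ℝ)
    (w : Fin n → ℝ) :
    ∑ i, fkdd a d p C i * w i = d⁻¹ * (a * (fkBil C (fkev p) (Fin.cons 0 w) +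
      fkBil C (Fin.cons 0 w) (fkev p))) := by
  have h1 : fkBil C (fkev p) (Fin.cons 0 w) = ∑ i, (∑ α, C α i.succ * fkev p α) * w i := by
    unfold fkBil
    rw [Finset.sum_comm, Fin.sum_univ_succ]
    simp only [Fin.cons_zero, Fin.cons_succ, mul_zero, Finset.sum_const_zero, zero_add,
      Finset.sum_mul]
    refine Finset.sum_congr rfl fun i _ => Finset.sum_congr rfl fun α _ => ?_
    ring
  have h2 : fkBil C (Fin.cons 0 w) (fkev p) = ∑ i, (∑ β, C i.succ β * fkev p β) * w i := by
    unfold fkBil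
    rw [Fin.sum_univ_succ]
    simp only [Fin.cons_zero, Fin.cons_succ, zero_mul, mul_zero, Finset.sum_const_zero, zero_add,
      Finset.sum_mul]
    refine Finset.sum_congr rfl fun i _ => Finset.sum_congr rfl fun α _ => ?_
    ring
  rw [h1, h2, ← Finset.sum_add_distrib, Finset.mul_sum, Finset.mul_sum]
  refine Finset.sum_congr rfl fun i _ => ?_
  unfold fkdd; ring

theorem fkAA_sum (d : ℝ) (p : Fin n → ℝ) (M : Fin n → Fin (n + 1) → ℝ) :
    ∑ i, ∑ μ, fkAA d p i μ * M i μ =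
      d⁻¹ * (∑ i, M i i.succ - 2 * ∑ i, p i * M i 0) := by
  simp only [Finset.mul_sum, mul_sub]
  rw [← Finset.sum_sub_distrib]
  refine Finset.sum_congr rfl fun i _ => ?_
  simp only [fkAA, mul_assoc, ← Finset.mul_sum, add_mul, Finset.sum_add_distrib, ite_mul, zero_mul,
    one_mul, Finset.sum_ite_eq', Finset.mem_univ, if_true]
  ring

theorem fkgg_sum (d : ℝ) (p : Fin n → ℝ) (C1 : Fin (n + 1) → ℝ) (l h : ℝ)
    (w : Fin (n + 1) → ℝ) :
    ∑ μ, fkgg d p C1 l h μ * w μ =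
      d⁻¹ * (∑ α, C1 α * (∑ μ, fkL p α μ * w μ) + (-l - 2 * h) * w 0) := by
  simp only [fkgg, mul_assoc, ← Finset.mul_sum, add_mul, Finset.sum_add_distrib, ite_mul, zero_mul,
    Finset.sum_ite_eq', Finset.mem_univ, if_true]
  congr 2
  simp only [Finset.mul_sum, Finset.sum_mul]
  rw [Finset.sum_comm]
  refine Finset.sum_congr rfl fun i _ => Finset.sum_congr rfl fun α _ => ?_
  ring

theorem fk_algebra {a d s c0 h w00 : ℝ} {p l : Fin n → ℝ} {w : Fin (n + 1) → ℝ}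
    {M : Fin n → Fin (n + 1) → ℝ} {C : Fin (n + 1) → Fin (n + 1) → ℝ} {C1 : Fin (n + 1) → ℝ}
    (hs : s ≠ 0) (hd : d ≠ 0) (hdp : d = 1 - ∑ i, p i ^ 2)
    (hh : a * fkBil C (fkev p) (fkev p) - d = s * h)
    (heq : s * w00 + (w 0 + w 0) = s * ((∑ i, ∑ μ, fkAA d p i μ * M i μ +
      ∑ μ, ∑ ν, fkcc d p C μ ν * (w μ * w ν)) + ∑ μ, fkgg d p C1 (∑ i, l i) h μ * w μ) +
      (∑ i, fkdd a d p C i * w i.succ + fkg0 a d s p C1 c0 (∑ i, l i) h))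
    {q : Fin (n + 1) → ℝ} (hq0 : q 0 = -a * s⁻¹ + w 0)
    (hq : ∀ i : Fin n, q i.succ = w i.succ - p i * (-a * s⁻¹ + w 0)) :
    (a * (s ^ 2)⁻¹ + w00) - ∑ i, (M i i.succ - 2 * p i * M i 0 - l i * (-a * s⁻¹ + w 0) +
      p i ^ 2 * (a * (s ^ 2)⁻¹ + w00)) = fkBil C q q + ∑ α, C1 α * q α + c0 := by
  rw [fkAA_sum, fkcc_sum, fkgg_sum, fkdd_sum (C := C) (w := fun i => w i.succ)] at heq
  set R : Fin (n + 1) → ℝ := Fin.cons 0 (fun i => w i.succ) with hR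
  have hr : (fun α => ∑ μ, fkL p α μ * w μ) = fun α => (-w 0) * fkev p α + 1 * R α := by
    funext α
    rw [fkL_sum]
    refine Fin.cases ?_ (fun i => ?_) α
    · simp [fkev, hR]
    · simp [fkev, hR]; ring
  have hqr : q = fun α => (a * s⁻¹ - w 0) * fkev p α + 1 * R α := by
    funext α
    refine Fin.cases ?_ (fun i => ?_) α
    · rw [hq0]; simp [fkev, hR]; ring
    · rw [hq]; simp [fkev, hR]; ring
  have hlin : ∀ k m : ℝ, ∑ α, C1 α * (k * fkev p α + m * R α) =
      k * ∑ α, C1 α * fkev p α + m * ∑ α, C1 α * R α := by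
    intro k m
    simp only [Finset.mul_sum, ← Finset.sum_add_distrib]
    refine Finset.sum_congr rfl fun α _ => ?_
    ring
  have hr' : ∀ α, ∑ μ, fkL p α μ * w μ = (-w 0) * fkev p α + 1 * R α := fun α => congrFun hr α
  have hsum : ∑ i, (M i i.succ - 2 * p i * M i 0 - l i * (-a * s⁻¹ + w 0) +
      p i ^ 2 * (a * (s ^ 2)⁻¹ + w00)) = ∑ i, M i i.succ - 2 * ∑ i, p i * M i 0 -
      (∑ i, l i) * (-a * s⁻¹ + w 0) + (∑ i, p i ^ 2) * (a * (s ^ 2)⁻¹ + w00) := by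
    simp only [Finset.mul_sum, Finset.sum_mul, ← Finset.sum_add_distrib,
      ← Finset.sum_sub_distrib]
    refine Finset.sum_congr rfl fun α _ => ?_
    ring
  simp only [hr'] at heq
  rw [hlin, fkBil_comb] at heq
  rw [hqr, hlin, fkBil_comb, hsum]
  unfold fkg0 at heq
  have hP : ∑ i, p i ^ 2 = 1 - d := by linarith
  rw [hP]
  generalize fkBil C (fkev p) (fkev p) = bee at *
  generalize fkBil C (fkev p) R = beR at *
  generalize fkBil C R (fkev p) = bRe at *
  generalize fkBil C R R = bRR at *
  generalize ∑ α, C1 α * fkev p α = le at *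
  generalize ∑ α, C1 α * R α = lR at *
  generalize ∑ i, M i i.succ = m1 at *
  generalize ∑ i, p i * M i 0 = m2 at *
  generalize ∑ i, l i = ll at *
  generalize w 0 = w0 at *
  clear hq hq0 hr hqr hlin hr' hsum hR hdp hP
  have heq' := congrArg (fun y => d * y) heq
  have hdd : d * d⁻¹ = 1 := mul_inv_cancel₀ hd
  have heq2 : d * (s * w00 + (w0 + w0)) = s * (m1 - 2 * m2 + ((-w0 * -w0 * bee + -w0 * 1 * beR +
      1 * -w0 * bRe + 1 * 1 * bRR)) + (-w0 * le + 1 * lR + (-ll - 2 * h) * w0)) +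
      (a * (beR + bRe) + (s * c0 + a * le + a * ll + a * h)) := by
    rw [heq]
    linear_combination (s * (m1 - 2 * m2 + ((-w0 * -w0 * bee + -w0 * 1 * beR +
      1 * -w0 * bRe + 1 * 1 * bRR)) + (-w0 * le + 1 * lR + (-ll - 2 * h) * w0)) +
      (a * (beR + bRe) + (s * c0 + a * le + a * ll + a * h))) * hdd
  field_simp
  linear_combination s * heq2 - (a - 2 * s * w0) * hh

end FuchsAlgebra

section FuchsFinal

variable {n : ℕ}

theorem fk_ptd {u : ℝ → (Fin n → ℝ) → ℝ} {t : ℝ} {x : Fin n → ℝ}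
    (h : AnalyticAt ℝ (fun p : ℝ × (Fin n → ℝ) => u p.1 p.2) (t, x)) :
    ptd u t x = fkD (1, 0) (fun p : ℝ × (Fin n → ℝ) => u p.1 p.2) (t, x) := fk_partial_t h

theorem fk_pxd {u : ℝ → (Fin n → ℝ) → ℝ} {t : ℝ} {x : Fin n → ℝ}
    (h : AnalyticAt ℝ (fun p : ℝ × (Fin n → ℝ) => u p.1 p.2) (t, x)) (i : Fin n) :
    pxd i u t x = fkD (0, fke i) (fun p : ℝ × (Fin n → ℝ) => u p.1 p.2) (t, x) :=
  fk_partial_x h i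

theorem fk_ptd2 {u : ℝ → (Fin n → ℝ) → ℝ} {t : ℝ} {x : Fin n → ℝ}
    (h : AnalyticAt ℝ (fun p : ℝ × (Fin n → ℝ) => u p.1 p.2) (t, x)) :
    ptd (ptd u) t x =
      fkD (1, 0) (fkD (1, 0) (fun p : ℝ × (Fin n → ℝ) => u p.1 p.2)) (t, x) := by
  have hev : (fun p : ℝ × (Fin n → ℝ) => ptd u p.1 p.2) =ᶠ[𝓝 (t, x)]
      fkD (1, 0) (fun p : ℝ × (Fin n → ℝ) => u p.1 p.2) :=
    h.eventually_analyticAt.mono fun q hq => fk_ptd hq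
  rw [fk_ptd ((fkD_analyticAt h).congr hev.symm), (fkD_congr hev).self_of_nhds]

theorem fk_pxd2 {u : ℝ → (Fin n → ℝ) → ℝ} {t : ℝ} {x : Fin n → ℝ}
    (h : AnalyticAt ℝ (fun p : ℝ × (Fin n → ℝ) => u p.1 p.2) (t, x)) (i : Fin n) :
    pxd i (pxd i u) t x =
      fkD (0, fke i) (fkD (0, fke i) (fun p : ℝ × (Fin n → ℝ) => u p.1 p.2)) (t, x) := by
  have hev : (fun p : ℝ × (Fin n → ℝ) => pxd i u p.1 p.2) =ᶠ[𝓝 (t, x)]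
      fkD (0, fke i) (fun p : ℝ × (Fin n → ℝ) => u p.1 p.2) :=
    h.eventually_analyticAt.mono fun q hq => fk_pxd hq i
  rw [fk_pxd ((fkD_analyticAt h).congr hev.symm), (fkD_congr hev).self_of_nhds]

theorem fk_homog2 {U : Set (ℝ × (Fin n → ℝ))} {g : ℝ → (Fin n → ℝ) → ℝ → (Fin n → ℝ) → ℝ}
    (h : HomogPoly 2 U g) : ∃ C : Fin (n + 1) → Fin (n + 1) → ℝ × (Fin n → ℝ) → ℝ,
      (∀ α β, AnalyticOnNhd ℝ (C α β) U) ∧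
      ∀ t x τ ξ, g t x τ ξ = fkBil (fun α β => C α β (t, x)) (Fin.cons τ ξ) (Fin.cons τ ξ) := by
  obtain ⟨c, hc, hg⟩ := h
  refine ⟨fun α β p => c ![α, β] p.1 p.2, fun α β => hc _, fun t x τ ξ => ?_⟩
  rw [hg, fkBil, ← (finTwoArrowEquiv (Fin (n + 1))).symm.sum_comp, Fintype.sum_prod_type]
  simp [Fin.prod_univ_two]

theorem fk_homog1 {U : Set (ℝ × (Fin n → ℝ))} {g : ℝ → (Fin n → ℝ) → ℝ → (Fin n → ℝ) → ℝ}
    (h : HomogPoly 1 U g) : ∃ C : Fin (n + 1) → ℝ × (Fin n → ℝ) → ℝ,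
      (∀ α, AnalyticOnNhd ℝ (C α) U) ∧
      ∀ t x τ ξ, g t x τ ξ = ∑ α, C α (t, x) * (Fin.cons τ ξ : Fin (n + 1) → ℝ) α := by
  obtain ⟨c, hc, hg⟩ := h
  refine ⟨fun α p => c (fun _ => α) p.1 p.2, fun α => hc _, fun t x τ ξ => ?_⟩
  rw [hg, ← (Equiv.funUnique (Fin 1) (Fin (n + 1))).symm.sum_comp]
  simp
  rfl

theorem fk_homog0 {U : Set (ℝ × (Fin n → ℝ))} {g : ℝ → (Fin n → ℝ) → ℝ → (Fin n → ℝ) → ℝ}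
    (h : HomogPoly 0 U g) : ∃ C : ℝ × (Fin n → ℝ) → ℝ,
      AnalyticOnNhd ℝ C U ∧ ∀ t x τ ξ, g t x τ ξ = C (t, x) := by
  obtain ⟨c, hc, hg⟩ := h
  refine ⟨fun p => c default p.1 p.2, hc _, fun t x τ ξ => ?_⟩
  rw [hg]
  simp only [Finset.univ_unique, Finset.sum_singleton, Finset.univ_eq_empty, Finset.prod_empty,
    mul_one]
  exact congrArg (fun m => c m t x) (Subsingleton.elim _ _)

theorem fk_wave_point {a d c0 h t : ℝ} {x : Fin n → ℝ} {ψ : (Fin n → ℝ) → ℝ}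
    {W : ℝ × (Fin n → ℝ) → ℝ} {u : ℝ → (Fin n → ℝ) → ℝ} {z : ℝ × (Fin n → ℝ)}
    {p : Fin n → ℝ} {C : Fin (n + 1) → Fin (n + 1) → ℝ} {C1 : Fin (n + 1) → ℝ}
    (hz : z = fkTh ψ (t, x)) (hz1 : z.1 ≠ 0) (hu : ∀ t x, u t x = fkU a W (fkTh ψ (t, x)))
    (hψ : AnalyticAt ℝ ψ x) (hW : AnalyticAt ℝ W z) (hp : p = fun i => fkD (fke i) ψ x)
    (hd : d ≠ 0) (hdp : d = 1 - ∑ i, p i ^ 2)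
    (hh : a * fkBil C (fkev p) (fkev p) - d = z.1 * h)
    (heq : z.1 * fkD (1, 0) (fkD (1, 0) W) z + (fkD (1, 0) W z + fkD (1, 0) W z) =
      z.1 * ((∑ i, ∑ μ, fkAA d p i μ * fkD (0, fke i) (fkD (fkv fke μ) W) z +
      ∑ μ, ∑ ν, fkcc d p C μ ν * (fkD (fkv fke μ) W z * fkD (fkv fke ν) W z)) +
      ∑ μ, fkgg d p C1 (∑ i, fkD (fke i) (fkD (fke i) ψ) x) h μ * fkD (fkv fke μ) W z) +
      (∑ i, fkdd a d p C i * fkD (0, fke i) W z +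
      fkg0 a d z.1 p C1 c0 (∑ i, fkD (fke i) (fkD (fke i) ψ) x) h)) :
    ptd (ptd u) t x - lapx u t x =
      fkBil C (Fin.cons (ptd u t x) (gradx u t x)) (Fin.cons (ptd u t x) (gradx u t x)) +
      ∑ α, C1 α * (Fin.cons (ptd u t x) (gradx u t x) : Fin (n + 1) → ℝ) α + c0 := by
  subst hz
  have hue : (fun p : ℝ × (Fin n → ℝ) => u p.1 p.2) = fun q => fkU a W (fkTh ψ q) := by
    funext q; exact hu _ _
  have hψ' : AnalyticAt ℝ ψ (t, x).2 := hψ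
  have hU := fkU_analyticAt (a := a) hz1 hW
  have huan : AnalyticAt ℝ (fun p : ℝ × (Fin n → ℝ) => u p.1 p.2) (t, x) := by
    rw [hue]; exact hU.comp (fkTh_analyticAt hψ')
  have e1 : ptd u t x = -a * (fkTh ψ (t, x)).1⁻¹ + fkD (1, 0) W (fkTh ψ (t, x)) := by
    rw [fk_ptd huan, hue, fk_chain_s hψ' hU, fkU_D hz1 hW]; simp
  have e2 : ∀ i, pxd i u t x = fkD (0, fke i) W (fkTh ψ (t, x)) - p i *
      (-a * (fkTh ψ (t, x)).1⁻¹ + fkD (1, 0) W (fkTh ψ (t, x))) := by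
    intro i
    rw [fk_pxd huan, hue, fk_chain_x hψ' hU, fkU_D hz1 hW, fkU_D hz1 hW, hp]; simp
  have e3 : ptd (ptd u) t x = a * ((fkTh ψ (t, x)).1 ^ 2)⁻¹ +
      fkD (1, 0) (fkD (1, 0) W) (fkTh ψ (t, x)) := by
    rw [fk_ptd2 huan, hue, fk_chain_ss hψ' hU, fkU_DD hz1 hW]; simp
  have e4 : ∀ i, pxd i (pxd i u) t x = fkD (0, fke i) (fkD (0, fke i) W) (fkTh ψ (t, x)) -
      2 * p i * fkD (0, fke i) (fkD (1, 0) W) (fkTh ψ (t, x)) -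
      fkD (fke i) (fkD (fke i) ψ) x *
      (-a * (fkTh ψ (t, x)).1⁻¹ + fkD (1, 0) W (fkTh ψ (t, x))) +
      p i ^ 2 * (a * ((fkTh ψ (t, x)).1 ^ 2)⁻¹ +
      fkD (1, 0) (fkD (1, 0) W) (fkTh ψ (t, x))) := by
    intro i
    rw [fk_pxd2 huan, hue, fk_chain_xx hψ' hU, fkU_DD hz1 hW, fkU_DD hz1 hW, fkU_DD hz1 hW,
      fkU_D hz1 hW, hp]
    simp
  have key := fk_algebra (n := n) (a := a) (d := d) (s := (fkTh ψ (t, x)).1) (c0 := c0) (h := h)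
    (w00 := fkD (1, 0) (fkD (1, 0) W) (fkTh ψ (t, x))) (p := p)
    (l := fun i => fkD (fke i) (fkD (fke i) ψ) x)
    (w := fun μ => fkD (fkv fke μ) W (fkTh ψ (t, x)))
    (M := fun i μ => fkD (0, fke i) (fkD (fkv fke μ) W) (fkTh ψ (t, x)))
    (C := C) (C1 := C1) hz1 hd hdp hh heq
    (q := Fin.cons (ptd u t x) (gradx u t x)) e1 (fun i => e2 i)
  rw [← key, e3, lapx]
  congr 1
  exact Finset.sum_congr rfl fun i _ => e4 i

/-- gradient in flattened coordinates -/
noncomputable def fkp (ψ : (Fin n → ℝ) → ℝ) (z : ℝ × (Fin n → ℝ)) : Fin n → ℝ :=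
  fun i => fkD (fke i) ψ z.2

noncomputable def fkdz (ψ : (Fin n → ℝ) → ℝ) (z : ℝ × (Fin n → ℝ)) : ℝ :=
  1 - ∑ i, fkp ψ z i ^ 2

noncomputable def fklz (ψ : (Fin n → ℝ) → ℝ) (z : ℝ × (Fin n → ℝ)) : ℝ :=
  ∑ i, fkD (fke i) (fkD (fke i) ψ) z.2

theorem fk_comp_snd {f : (Fin n → ℝ) → ℝ} {z : ℝ × (Fin n → ℝ)} (hf : AnalyticAt ℝ f z.2) :
    AnalyticAt ℝ (fun z : ℝ × (Fin n → ℝ) => f z.2) z :=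
  AnalyticAt.comp (f := Prod.snd) hf analyticAt_snd

theorem fkp_an {ψ : (Fin n → ℝ) → ℝ} {z : ℝ × (Fin n → ℝ)} (hψ : AnalyticAt ℝ ψ z.2)
    (i : Fin n) : AnalyticAt ℝ (fun z => fkp ψ z i) z :=
  fk_comp_snd (f := fkD (fke i) ψ) (fkD_analyticAt hψ)

theorem fkdz_an {ψ : (Fin n → ℝ) → ℝ} {z : ℝ × (Fin n → ℝ)} (hψ : AnalyticAt ℝ ψ z.2) :
    AnalyticAt ℝ (fkdz ψ) z :=
  analyticAt_const.fun_sub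
    (Finset.analyticAt_fun_sum _ fun i _ => (fkp_an hψ i).fun_pow 2)

theorem fklz_an {ψ : (Fin n → ℝ) → ℝ} {z : ℝ × (Fin n → ℝ)} (hψ : AnalyticAt ℝ ψ z.2) :
    AnalyticAt ℝ (fklz ψ) z :=
  Finset.analyticAt_fun_sum _ fun i _ =>
    fk_comp_snd (f := fkD (fke i) (fkD (fke i) ψ)) (fkD_analyticAt (fkD_analyticAt hψ))

theorem fkev_an {ψ : (Fin n → ℝ) → ℝ} {z : ℝ × (Fin n → ℝ)} (hψ : AnalyticAt ℝ ψ z.2)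
    (α : Fin (n + 1)) : AnalyticAt ℝ (fun z => fkev (fkp ψ z) α) z := by
  refine Fin.cases ?_ (fun i => ?_) α
  · exact analyticAt_const
  · exact fkp_an hψ i

theorem fkL_an {ψ : (Fin n → ℝ) → ℝ} {z : ℝ × (Fin n → ℝ)} (hψ : AnalyticAt ℝ ψ z.2)
    (α μ : Fin (n + 1)) : AnalyticAt ℝ (fun z => fkL (fkp ψ z) α μ) z := by
  unfold fkL
  refine analyticAt_const.fun_sub ?_
  split_ifs
  · refine Fin.cases ?_ (fun i => ?_) α
    · exact analyticAt_const
    · exact fkp_an hψ i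
  · exact analyticAt_const

theorem fk_omega {U : Set (ℝ × (Fin n → ℝ))} (hU : IsOpen U) {V : Set (Fin n → ℝ)}
    (hV : IsOpen V) {ψ : (Fin n → ℝ) → ℝ} (hψ : AnalyticOnNhd ℝ ψ V)
    (hVU : ∀ x ∈ V, (ψ x, x) ∈ U) {P : ℝ × (Fin n → ℝ) → Prop}
    (hP : ∀ x ∈ V, ∀ᶠ z in 𝓝 ((0 : ℝ), x), P z) :
    ∃ Ω : Set (ℝ × (Fin n → ℝ)), IsOpen Ω ∧ (∀ x ∈ V, (ψ x, x) ∈ Ω) ∧ Ω ⊆ U ∧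
      ∀ q ∈ Ω, q.2 ∈ V ∧ P (fkTh ψ q) := by
  refine ⟨{p | ∀ᶠ q in 𝓝 p, q ∈ U ∧ q.2 ∈ V ∧ P (fkTh ψ q)}, isOpen_setOfPred_eventually_nhds,
    fun x hx => ?_, fun p hp => hp.self_of_nhds.1, fun p hp => hp.self_of_nhds.2⟩
  have h1 : ∀ᶠ q : ℝ × (Fin n → ℝ) in 𝓝 (ψ x, x), q ∈ U := hU.mem_nhds (hVU x hx)
  have h2 : ∀ᶠ q : ℝ × (Fin n → ℝ) in 𝓝 (ψ x, x), q.2 ∈ V :=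
    (continuous_snd.continuousAt (x := (ψ x, x))).eventually (hV.mem_nhds hx)
  have hc : ContinuousAt (fkTh ψ) (ψ x, x) :=
    (fkTh_analyticAt (p := (ψ x, x)) (hψ x hx)).continuousAt
  have h0 : fkTh ψ (ψ x, x) = (0, x) := by simp [fkTh]
  have h3 : ∀ᶠ q : ℝ × (Fin n → ℝ) in 𝓝 (ψ x, x), P (fkTh ψ q) :=
    hc.eventually (by rw [h0]; exact hP x hx)
  exact h1.and (h2.and h3)

theorem fk_final {U : Set (ℝ × (Fin n → ℝ))} (hU : IsOpen U)
    {C : Fin (n + 1) → Fin (n + 1) → ℝ × (Fin n → ℝ) → ℝ}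
    (hC : ∀ α β, AnalyticOnNhd ℝ (C α β) U)
    {C1 : Fin (n + 1) → ℝ × (Fin n → ℝ) → ℝ} (hC1 : ∀ α, AnalyticOnNhd ℝ (C1 α) U)
    {c0 : ℝ × (Fin n → ℝ) → ℝ} (hc0 : AnalyticOnNhd ℝ c0 U)
    {ψ : (Fin n → ℝ) → ℝ} (hψ : AnalyticOnNhd ℝ ψ {x | (ψ x, x) ∈ U}) {a : ℝ}
    (hcond : ∀ x, (ψ x, x) ∈ U → fkdz ψ (0, x) ≠ 0 ∧ fkdz ψ (0, x) =
      a * fkBil (fun α β => C α β (ψ x, x)) (fkev (fkp ψ (0, x))) (fkev (fkp ψ (0, x)))) :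
    ∃ Ω : Set (ℝ × (Fin n → ℝ)), IsOpen Ω ∧ {p ∈ U | p.1 = ψ p.2} ⊆ Ω ∧ Ω ⊆ U ∧
      ∃ v : ℝ → (Fin n → ℝ) → ℝ,
        AnalyticOnNhd ℝ (fun p : ℝ × (Fin n → ℝ) => v p.1 p.2) Ω ∧
        ∀ u : ℝ → (Fin n → ℝ) → ℝ, (∀ t x, u t x = -a * Real.log (t - ψ x) + v t x) →
        ∀ t x, (t, x) ∈ Ω → t - ψ x ≠ 0 → ptd (ptd u) t x - lapx u t x =
      fkBil (fun α β => C α β (t, x)) (Fin.cons (ptd u t x) (gradx u t x))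
        (Fin.cons (ptd u t x) (gradx u t x)) +
      ∑ α, C1 α (t, x) * (Fin.cons (ptd u t x) (gradx u t x) : Fin (n + 1) → ℝ) α +
      c0 (t, x) := by
  set V : Set (Fin n → ℝ) := {x | (ψ x, x) ∈ U} with hVdef
  have hV : IsOpen V := by
    rw [isOpen_iff_mem_nhds]
    intro x hx
    have hcont : ContinuousAt (fun y => (ψ y, y)) x :=
      (hψ x hx).continuousAt.prodMk continuousAt_id
    exact hcont (hU.mem_nhds hx)
  set sh : ℝ × (Fin n → ℝ) → ℝ × (Fin n → ℝ) := fun z => (z.1 + ψ z.2, z.2) with hsh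
  have hshan : ∀ x ∈ V, AnalyticAt ℝ sh (0, x) := fun x hx =>
    (analyticAt_fst.fun_add (fk_comp_snd (z := ((0 : ℝ), x)) (hψ x hx))).prod analyticAt_snd
  have hsh0 : ∀ x, sh (0, x) = (ψ x, x) := fun x => by simp [hsh]
  have hshU : ∀ f : ℝ × (Fin n → ℝ) → ℝ, AnalyticOnNhd ℝ f U → ∀ x ∈ V,
      AnalyticAt ℝ (fun z => f (sh z)) (0, x) := fun f hf x hx =>
    AnalyticAt.comp (f := sh) (by rw [hsh0]; exact hf _ hx) (hshan x hx)
  have hψ2 : ∀ x ∈ V, AnalyticAt ℝ ψ ((0 : ℝ), x).2 := fun x hx => hψ x hx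
  have hdi : ∀ x ∈ V, AnalyticAt ℝ (fun z => (fkdz ψ z)⁻¹) (0, x) := fun x hx =>
    (fkdz_an (hψ2 x hx)).fun_inv (hcond x hx).1
  obtain ⟨h, hh⟩ := fk_div hV (F := fun z => a * fkBil (fun α β => C α β (sh z))
      (fkev (fkp ψ z)) (fkev (fkp ψ z)) - fkdz ψ z) (fun x hx => by
    refine (analyticAt_const.fun_mul ?_).fun_sub (fkdz_an (hψ2 x hx))
    exact Finset.analyticAt_fun_sum _ fun α _ => Finset.analyticAt_fun_sum _ fun β _ =>
      (hshU _ (hC α β) x hx).fun_mul ((fkev_an (hψ2 x hx) α).fun_mul (fkev_an (hψ2 x hx) β)))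
    (fun x hx => by
      beta_reduce
      rw [hsh0, ← (hcond x hx).2, sub_self])
  obtain ⟨W, hW⟩ := fk_main (e := fke) fke_norm hV
    (A := fun i μ z => fkAA (fkdz ψ z) (fkp ψ z) i μ)
    (c := fun μ ν z => fkcc (fkdz ψ z) (fkp ψ z) (fun α β => C α β (sh z)) μ ν)
    (γ := fun μ z => fkgg (fkdz ψ z) (fkp ψ z) (fun α => C1 α (sh z)) (fklz ψ z) (h z) μ)
    (δ := fun i z => fkdd a (fkdz ψ z) (fkp ψ z) (fun α β => C α β (sh z)) i)
    (g := fun z => fkg0 a (fkdz ψ z) z.1 (fkp ψ z) (fun α => C1 α (sh z)) (c0 (sh z))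
      (fklz ψ z) (h z))
    (fun i μ x hx => by
      refine (hdi x hx).fun_mul (AnalyticAt.fun_add ?_ analyticAt_const)
      split_ifs
      · exact analyticAt_const.fun_mul (fkp_an (hψ2 x hx) i)
      · exact analyticAt_const)
    (fun μ ν x hx => (hdi x hx).fun_mul (Finset.analyticAt_fun_sum _ fun α _ =>
      Finset.analyticAt_fun_sum _ fun β _ => (hshU _ (hC α β) x hx).fun_mul
        ((fkL_an (hψ2 x hx) α μ).fun_mul (fkL_an (hψ2 x hx) β ν))))
    (fun μ x hx => by
      refine (hdi x hx).fun_mul (AnalyticAt.fun_add (Finset.analyticAt_fun_sum _ fun α _ =>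
        (hshU _ (hC1 α) x hx).fun_mul (fkL_an (hψ2 x hx) α μ)) ?_)
      split_ifs
      · exact (fklz_an (hψ2 x hx)).fun_neg.fun_sub (analyticAt_const.fun_mul (hh x hx).1)
      · exact analyticAt_const)
    (fun i x hx => (hdi x hx).fun_mul (analyticAt_const.fun_mul (AnalyticAt.fun_add
      (Finset.analyticAt_fun_sum _ fun α _ =>
        (hshU _ (hC α i.succ) x hx).fun_mul (fkev_an (hψ2 x hx) α))
      (Finset.analyticAt_fun_sum _ fun β _ =>
        (hshU _ (hC i.succ β) x hx).fun_mul (fkev_an (hψ2 x hx) β)))))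
    (fun x hx => (hdi x hx).fun_mul
      ((((analyticAt_fst.fun_mul (hshU _ hc0 x hx)).fun_add
      (analyticAt_const.fun_mul (Finset.analyticAt_fun_sum _ fun α _ =>
        (hshU _ (hC1 α) x hx).fun_mul (fkev_an (hψ2 x hx) α)))).fun_add
      (analyticAt_const.fun_mul (fklz_an (hψ2 x hx)))).fun_add
      (analyticAt_const.fun_mul (hh x hx).1)))
  obtain ⟨Ω, hΩ, hSig, hΩU, hΩP⟩ := fk_omega hU hV hψ (fun x hx => (show (ψ x, x) ∈ U from hx))
    (fun x hx => (hW x hx).1.eventually_analyticAt.and ((hh x hx).2.and (hW x hx).2))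
  refine ⟨Ω, hΩ, fun p hp => ?_, hΩU, fun t x => W (fkTh ψ (t, x)), ?_, ?_⟩
  · have hp2 : (p.1, p.2) ∈ U := hp.1
    rw [hp.2] at hp2
    have h3 := hSig p.2 hp2
    rw [← hp.2] at h3
    exact h3
  · intro q hq
    obtain ⟨hqV, hqW, -, -⟩ := hΩP q hq
    exact AnalyticAt.comp (f := fkTh ψ) hqW (fkTh_analyticAt (hψ _ hqV))
  · intro u hu t x hq hne
    obtain ⟨hqV, hqW, hq1, hq2⟩ := hΩP (t, x) hq
    have hs : sh (fkTh ψ (t, x)) = (t, x) := by simp [hsh, fkTh]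
    unfold fkHF fkQF at hq2
    beta_reduce at hq2
    rw [hs] at hq1 hq2
    exact fk_wave_point (z := fkTh ψ (t, x)) (p := fkp ψ (fkTh ψ (t, x))) rfl hne hu (hψ x hqV)
      hqW rfl (hcond x hqV).1 rfl hq1 hq2

end FuchsFinal

end FuchsTheory

/-- Under the additional time-reversal condition `f₂(t,x;1,∇ψ) = f₂(t,x;-1,∇ψ)`, there
are singular solutions on the negative side `{t < ψ(x)}` of `Σ` of the form
`-a log(ψ(x)-t) + v`, and together with the positive side there exist singular solutions
on both sides of the noncharacteristic hypersurface `Σ`. -/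
theorem stmt8 {n : ℕ} (U : Set (ℝ × (Fin n → ℝ))) (hU : IsOpen U)
    (f₂ f₁ f₀ : ℝ → (Fin n → ℝ) → ℝ → (Fin n → ℝ) → ℝ)
    (hf₂ : HomogPoly 2 U f₂) (hf₁ : HomogPoly 1 U f₁) (hf₀ : HomogPoly 0 U f₀)
    (ψ : (Fin n → ℝ) → ℝ) (hψ : AnalyticOnNhd ℝ ψ {x | (ψ x, x) ∈ U})
    (a : ℝ) (ha : a ≠ 0)
    (hcond : ∀ x, (ψ x, x) ∈ U →
      1 - ∑ i, gradp ψ x i ^ 2 ≠ 0 ∧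
      1 - ∑ i, gradp ψ x i ^ 2 = a * f₂ (ψ x) x (-1) (gradp ψ x))
    (hsym : ∀ t x, f₂ t x 1 (gradp ψ x) = f₂ t x (-1) (gradp ψ x)) :
    ∃ Ω : Set (ℝ × (Fin n → ℝ)), IsOpen Ω ∧ {p ∈ U | p.1 = ψ p.2} ⊆ Ω ∧ Ω ⊆ U ∧
      (∃ v : ℝ → (Fin n → ℝ) → ℝ,
        AnalyticOnNhd ℝ (fun p : ℝ × (Fin n → ℝ) => v p.1 p.2) Ω ∧
        SolvesWave f₂ f₁ f₀ (fun t x => -a * Real.log (ψ x - t) + v t x)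
          (Ω ∩ {p | p.1 < ψ p.2})) ∧
      (∃ v' : ℝ → (Fin n → ℝ) → ℝ,
        AnalyticOnNhd ℝ (fun p : ℝ × (Fin n → ℝ) => v' p.1 p.2) Ω ∧
        SolvesWave f₂ f₁ f₀ (fun t x => -a * Real.log (t - ψ x) + v' t x)
          (Ω ∩ {p | ψ p.2 < p.1})) := by
  obtain ⟨C, hC, hC'⟩ := fk_homog2 hf₂
  obtain ⟨C1, hC1, hC1'⟩ := fk_homog1 hf₁
  obtain ⟨c0, hc0, hc0'⟩ := fk_homog0 hf₀
  have hgp : ∀ x, (ψ x, x) ∈ U → gradp ψ x = fkp ψ (0, x) := fun x hx => by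
    funext i
    exact fk_gradp (hψ x hx) i
  obtain ⟨Ω, hΩ, hSig, hΩU, v, hv, hsol⟩ := fk_final hU hC hC1 hc0 hψ (a := a) (fun x hx => by
    have h1 := hcond x hx
    rw [hgp x hx, hC'] at h1
    exact h1)
  refine ⟨Ω, hΩ, hSig, hΩU, ⟨v, hv, ?_⟩, ⟨v, hv, ?_⟩⟩
  · intro t x htx
    have hlt : t < ψ x := htx.2
    rw [hC', hC1', hc0']
    refine hsol _ (fun t x => ?_) t x htx.1 (by linarith)
    beta_reduce
    rw [← Real.log_neg_eq_log (ψ x - t), neg_sub]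
  · intro t x htx
    have hlt : ψ x < t := htx.2
    rw [hC', hC1', hc0']
    exact hsol _ (fun t x => rfl) t x htx.1 (by linarith)
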